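/- arXiv:2111.14026 — 13 statements merged into one kernel-verified Lean document; each statement's English description precedes it below -/
import Mathlib

section
/- (Insdel-metric Singleton bound) Every code C ⊆ [q]^n with at least two codewords satisfies |C| ≤ q^{n − d_I(C)/2 + 1}. -/
/-!
The proof is the puncturing argument for the Singleton bound. Put `k = n - d/2 + 1`. If `|C| > q^k`,
two distinct codewords share their first `k` letters by the pigeonhole principle; that common prefix
is a common subsequence, so their insdel distance is at most `2n - 2k < d`, a contradiction
(`insdelDist_le_of_prefix_eq`). If `k > n` the bound is just `|C| ≤ q^n`.
-/

open scoped BigOperators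

/-- Length of a longest common subsequence of two words of length `n`. -/
noncomputable def lcsLen {α : Type*} {n : ℕ} (u v : Fin n → α) : ℕ :=
  sSup {ℓ : ℕ | ∃ w : List α, w.length = ℓ ∧ w.Sublist (List.ofFn u) ∧ w.Sublist (List.ofFn v)}

/-- Insdel distance between two words of length `n`: `d_I(u,v) = 2n - 2·ℓ_LCS(u,v)`. -/
noncomputable def insdelDist {α : Type*} {n : ℕ} (u v : Fin n → α) : ℕ :=
  2 * n - 2 * lcsLen u v

/-- Minimum insdel distance of a code. -/
noncomputable def insdelDistSet {α : Type*} {n : ℕ} (C : Set (Fin n → α)) : ℕ :=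
  sInf {d : ℕ | ∃ u ∈ C, ∃ v ∈ C, u ≠ v ∧ insdelDist u v = d}

/-- Minimum Hamming distance of a code. -/
noncomputable def hammingDistSet {α : Type*} {n : ℕ} [DecidableEq α] (C : Set (Fin n → α)) : ℕ :=
  sInf {d : ℕ | ∃ u ∈ C, ∃ v ∈ C, u ≠ v ∧ hammingDist u v = d}

/-- Two words agreeing on their first `k` letters have insdel distance at most `2n - 2k`, since the
shared prefix is a common subsequence. -/
lemma insdelDist_le_of_prefix_eq {α : Type*} {n k : ℕ} (hk : k ≤ n) (u v : Fin n → α)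
    (h : ∀ i : Fin k, u (Fin.castLE hk i) = v (Fin.castLE hk i)) :
    insdelDist u v ≤ 2 * n - 2 * k := by
  have hlcs : k ≤ lcsLen u v := by
    -- boundedness is needed, as `sSup` of an unbounded set of naturals is `0`
    apply le_csSup
    · refine ⟨n, ?_⟩
      rintro _ ⟨w, rfl, hw, -⟩
      simpa using hw.length_le
    · have htake : (List.ofFn u).take k = (List.ofFn v).take k := by
        apply List.ext_getElem
        · simp
        · intro i h1 h2
          simp only [List.length_take, List.length_ofFn] at h1
          simp only [List.getElem_take, List.getElem_ofFn]
          exact h ⟨i, by omega⟩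
      refine ⟨(List.ofFn u).take k, by simp [hk], List.take_sublist _ _, ?_⟩
      rw [htake]
      exact List.take_sublist _ _
  unfold insdelDist
  omega

/-- Insdel-metric Singleton bound: every code `C ⊆ [q]^n` with at least two codewords
satisfies `|C| ≤ q^(n - d_I(C)/2 + 1)`. -/
theorem insdel_singleton_bound (q n : ℕ) (hq : 2 ≤ q) (hn : 1 ≤ n)
    (C : Finset (Fin n → Fin q)) (hC : 2 ≤ C.card) :
    C.card ≤ q ^ (n - insdelDistSet (C : Set (Fin n → Fin q)) / 2 + 1) := by
  set d := insdelDistSet (C : Set (Fin n → Fin q)) with hd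
  by_cases hk : n - d / 2 + 1 ≤ n
  · by_contra! hlt
    obtain ⟨u, hu, v, hv, huv, heq⟩ := Finset.exists_ne_map_eq_of_card_lt_of_maps_to
      (s := C) (t := (Finset.univ : Finset (Fin (n - d / 2 + 1) → Fin q)))
      (by simpa using hlt) (f := fun w i => w (Fin.castLE hk i)) (fun _ _ => by simp)
    have h1 := insdelDist_le_of_prefix_eq hk u v (fun i => congrFun heq i)
    have h2 : d ≤ insdelDist u v := Nat.sInf_le ⟨u, hu, v, hv, huv, rfl⟩
    omega
  · calc C.card ≤ Fintype.card (Fin n → Fin q) := Finset.card_le_univ C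
      _ = q ^ n := by simp
      _ ≤ q ^ (n - d / 2 + 1) := Nat.pow_le_pow_right (by omega) (by omega)
end

section
/- If n ≥ 3 and C ⊆ [q]^n is a code of size M with at least two codewords and insdel distance d_I(C) = 2n − 2, then M ≤ (q² + q)/2. In other words, I_q(n, 2n−2) ≤ (q² + q)/2 for n ≥ 3. -/
/-!
Insdel distance at least `2n - 2` means that distinct codewords have no common subsequence of
length two. Hence the sets of ordered pairs `(u₀, u₁), (u₀, u₂), (u₁, u₂)` read off from the first
three letters are pairwise disjoint over the code. Give a diagonal pair `(a, a)` weight `2` and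
every other pair weight `1`; the total weight of `[q] × [q]` is `q² + q`. Each codeword carries
weight at least `2`: either one of its pairs is diagonal, or `u₁ ≠ u₂` and its first two pairs are
distinct. Therefore `2 |C| ≤ q² + q`.
-/

open scoped BigOperators

/-- `I_q(n,d)`: the largest size of a code in `[q]^n` with insdel distance at least `d`. -/
noncomputable def maxInsdelSize (q n d : ℕ) : ℕ :=
  sSup {M : ℕ | ∃ C : Finset (Fin n → Fin q), C.card = M ∧
    ∀ u ∈ C, ∀ v ∈ C, u ≠ v → d ≤ insdelDist u v}

/-- Two words of length at least two whose insdel distance is at least `2n - 2` have no common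
subsequence of length two. -/
lemma not_common_pair {α : Type*} {n : ℕ} (hn : 2 ≤ n) {u v : Fin n → α}
    (h : 2 * n - 2 ≤ insdelDist u v) (a b : α)
    (hu : [a, b].Sublist (List.ofFn u)) (hv : [a, b].Sublist (List.ofFn v)) : False := by
  have h2 : 2 ≤ lcsLen u v := by
    refine le_csSup ⟨n, ?_⟩ ⟨[a, b], rfl, hu, hv⟩
    rintro _ ⟨w, rfl, hw, -⟩
    simpa using hw.length_le
  unfold insdelDist at h
  omega

lemma pair_sublist_ofFn {α : Type*} {n : ℕ} (u : Fin n → α) {i j : Fin n} (hij : i < j) :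
    [u i, u j].Sublist (List.ofFn u) := by
  have h : [i, j].Sublist (List.finRange n) := by
    apply List.sublist_of_subperm_of_pairwise (r := (· < ·))
    · exact (List.subperm_of_subset (by simp [hij.ne]) (by intro x _; simp))
    · simp [hij]
    · exact List.pairwise_lt_finRange n
  simpa [List.ofFn_eq_map] using h.map u

/-- The ordered pairs read off from the first three letters of a word. -/
def headPairs {q n : ℕ} (hn : 3 ≤ n) (u : Fin n → Fin q) : Finset (Fin q × Fin q) :=
  {(u ⟨0, by omega⟩, u ⟨1, by omega⟩), (u ⟨0, by omega⟩, u ⟨2, by omega⟩),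
    (u ⟨1, by omega⟩, u ⟨2, by omega⟩)}

lemma sublist_of_mem_headPairs {q n : ℕ} (hn : 3 ≤ n) (u : Fin n → Fin q) (p : Fin q × Fin q)
    (hp : p ∈ headPairs hn u) : [p.1, p.2].Sublist (List.ofFn u) := by
  simp only [headPairs, Finset.mem_insert, Finset.mem_singleton] at hp
  rcases hp with rfl | rfl | rfl <;> exact pair_sublist_ofFn u (by simp)

/-- The weight of an ordered pair: `2` on the diagonal and `1` elsewhere. -/
def pairWeight {q : ℕ} (p : Fin q × Fin q) : ℕ := 1 + if p.1 = p.2 then 1 else 0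

lemma sum_pairWeight (q : ℕ) : ∑ p : Fin q × Fin q, pairWeight p = q ^ 2 + q := by
  rw [Fintype.sum_prod_type]
  simp [pairWeight, Finset.sum_add_distrib, sq, mul_add]

lemma two_le_sum_headPairs {q n : ℕ} (hn : 3 ≤ n) (u : Fin n → Fin q) :
    2 ≤ ∑ p ∈ headPairs hn u, pairWeight p := by
  by_cases h : ∃ p ∈ headPairs hn u, p.1 = p.2
  · obtain ⟨p, hp, hd⟩ := h
    calc 2 = pairWeight p := by simp [pairWeight, hd]
      _ ≤ _ := Finset.single_le_sum (fun _ _ => Nat.zero_le _) hp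
  · push Not at h
    have h12 : u ⟨1, by omega⟩ ≠ u ⟨2, by omega⟩ :=
      h (u ⟨1, by omega⟩, u ⟨2, by omega⟩) (by simp [headPairs])
    have hc : 1 < (headPairs hn u).card := by
      refine Finset.one_lt_card.2 ⟨(u ⟨0, by omega⟩, u ⟨1, by omega⟩), by simp [headPairs],
        (u ⟨0, by omega⟩, u ⟨2, by omega⟩), by simp [headPairs], ?_⟩
      simpa using h12
    calc 2 ≤ (headPairs hn u).card := hc
      _ = ∑ p ∈ headPairs hn u, 1 := by simp
      _ ≤ _ := Finset.sum_le_sum fun p _ => by simp [pairWeight]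

lemma card_le_of_insdelDist {q n : ℕ} (hn : 3 ≤ n) (C : Finset (Fin n → Fin q))
    (hC : ∀ u ∈ C, ∀ v ∈ C, u ≠ v → 2 * n - 2 ≤ insdelDist u v) :
    C.card ≤ (q ^ 2 + q) / 2 := by
  have hdisj : (C : Set (Fin n → Fin q)).PairwiseDisjoint (headPairs hn) := by
    intro u hu v hv huv
    refine Finset.disjoint_left.2 fun p hp hp' => ?_
    exact not_common_pair (by omega) (hC u hu v hv huv) p.1 p.2
      (sublist_of_mem_headPairs hn u p hp) (sublist_of_mem_headPairs hn v p hp')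
  have : C.card * 2 ≤ q ^ 2 + q := by
    calc C.card * 2 = ∑ u ∈ C, 2 := by simp
      _ ≤ ∑ u ∈ C, ∑ p ∈ headPairs hn u, pairWeight p :=
          Finset.sum_le_sum fun u _ => two_le_sum_headPairs hn u
      _ = ∑ p ∈ C.biUnion (headPairs hn), pairWeight p := (Finset.sum_biUnion hdisj).symm
      _ ≤ ∑ p, pairWeight p := Finset.sum_le_sum_of_subset (Finset.subset_univ _)
      _ = q ^ 2 + q := sum_pairWeight q
  omega

/-- If `n ≥ 3` and `C ⊆ [q]^n` has at least two codewords and insdel distance `2n - 2`,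
then `|C| ≤ (q² + q)/2`; in other words `I_q(n, 2n-2) ≤ (q² + q)/2` for `n ≥ 3`. -/
theorem size_bound_insdel_two_n_sub_two (q n : ℕ) (hq : 2 ≤ q) (hn : 3 ≤ n) :
    (∀ C : Finset (Fin n → Fin q), 2 ≤ C.card →
      insdelDistSet (C : Set (Fin n → Fin q)) = 2 * n - 2 →
      C.card ≤ (q ^ 2 + q) / 2) ∧
    maxInsdelSize q n (2 * n - 2) ≤ (q ^ 2 + q) / 2 := by
  constructor
  · intro C _ hd
    refine card_le_of_insdelDist hn C fun u hu v hv huv => ?_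
    rw [← hd]
    exact Nat.sInf_le ⟨u, hu, v, hv, huv, rfl⟩
  · refine csSup_le' ?_
    rintro _ ⟨C, rfl, hC⟩
    exact card_le_of_insdelDist hn C hC
end

section
/- For all integers q ≥ 2, n ≥ 3 and every even integer d with 4 ≤ d ≤ 2n − 2, one has I_q(n, d) ≤ (q^{n − d/2 + 1} + q^{n − d/2})/2. -/
/-!
Put `k = n - d/2 + 1`, so that `2 ≤ k < n`. If two distinct codewords shared a subsequence of
length `k`, their insdel distance would be at most `2n - 2k < d`; hence the sets of length-`k`
subsequences of the codewords are pairwise disjoint subsets of `[q]^k`. A non-constant word has at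
least two length-`k` subsequences: at a place where adjacent letters `a ≠ b` occur, fix `k - 1` of
the other positions and add either `a` or `b` (`exists_two_sublists`). There are at most `q`
constant words, each with at least one such subsequence. Therefore `2|C| ≤ q^k + q`, and
`q ≤ q^(k-1)` since `k ≥ 2`.

The count is carried out by an injection `C × Bool → [q]^k ⊕ [q]` (`two_mul_card_le`).
-/

open scoped BigOperators

lemma forall_eq_or_exists_adjacent_ne {α : Type*} (l : List α) :
    (∀ x ∈ l, ∀ y ∈ l, x = y) ∨ ∃ A a b B, l = A ++ a :: b :: B ∧ a ≠ b := by
  induction l with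
  | nil => left; simp
  | cons x l ih =>
    rcases ih with h | ⟨A, a, b, B, rfl, hab⟩
    · cases l with
      | nil => left; simp
      | cons y l =>
        by_cases hxy : x = y
        · left
          subst hxy
          have h' : ∀ z ∈ x :: x :: l, z = x := by
            intro z hz
            rcases List.mem_cons.1 hz with rfl | hz
            · rfl
            · exact h z hz x (by simp)
          intro z hz w hw
          rw [h' z hz, h' w hw]
        · exact Or.inr ⟨[], x, y, l, rfl, hxy⟩
    · exact Or.inr ⟨x :: A, a, b, B, rfl, hab⟩

lemma exists_two_sublists {α : Type*} {A B : List α} {a b : α} (hab : a ≠ b) {k : ℕ}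
    (hk : 1 ≤ k) (hkn : k < (A ++ a :: b :: B).length) :
    ∃ v w : List α, v.length = k ∧ w.length = k ∧ v ≠ w ∧
      v.Sublist (A ++ a :: b :: B) ∧ w.Sublist (A ++ a :: b :: B) := by
  -- `A.take (k - 1)` and the prefix of `B` together supply `k - 1` letters besides `a` or `b`.
  have hlen : (A.take (k - 1)).length + (B.take (k - 1 - A.length)).length + 1 = k := by
    simp at hkn ⊢
    omega
  refine ⟨A.take (k - 1) ++ a :: B.take (k - 1 - A.length),
    A.take (k - 1) ++ b :: B.take (k - 1 - A.length), ?_, ?_, ?_, ?_, ?_⟩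
  · rw [List.length_append, List.length_cons]; omega
  · rw [List.length_append, List.length_cons]; omega
  · simpa using hab
  · exact (List.take_sublist _ _).append
      (((List.take_sublist _ _).trans (List.sublist_cons_self _ _)).cons_cons a)
  · exact (List.take_sublist _ _).append
      (((List.take_sublist _ _).cons_cons b).trans (List.sublist_cons_self _ _))

lemma length_le_lcsLen {α : Type*} {n : ℕ} {u v : Fin n → α} {w : List α}
    (hu : w.Sublist (List.ofFn u)) (hv : w.Sublist (List.ofFn v)) : w.length ≤ lcsLen u v := by
  apply le_csSup
  · refine ⟨n, ?_⟩
    rintro _ ⟨w', rfl, h, -⟩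
    simpa using h.length_le
  · exact ⟨w, rfl, hu, hv⟩

/-- The images of `(u, false)` and `(u, true)` under the counting injection: a length-`k`
subsequence of `u`, together with a second one if `u` is not constant, and otherwise the letter
that `u` repeats. -/
lemma exists_labels {α : Type*} {n k : ℕ} (hk : 1 ≤ k) (hkn : k < n) (u : Fin n → α) :
    ∃ (p : List.Vector α k) (r : List.Vector α k ⊕ α), p.1.Sublist (List.ofFn u) ∧
      r ≠ Sum.inl p ∧ (∀ s, r = Sum.inl s → s.1.Sublist (List.ofFn u)) ∧
      (∀ a, r = Sum.inr a → u = fun _ => a) := by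
  rcases forall_eq_or_exists_adjacent_ne (List.ofFn u) with h | ⟨A, a, b, B, hl, hab⟩
  · refine ⟨⟨(List.ofFn u).take k, by simp; omega⟩, Sum.inr (u ⟨0, by omega⟩),
      List.take_sublist _ _, by simp, by simp, ?_⟩
    rintro _ ⟨⟩
    funext i
    exact h _ (by simp) _ (by simp)
  · obtain ⟨v, w, hv, hw, hne, hvl, hwl⟩ := exists_two_sublists (A := A) (B := B) hab hk
      (by rw [← hl]; simpa using hkn)
    refine ⟨⟨v, hv⟩, Sum.inl ⟨w, hw⟩, hl ▸ hvl, ?_, ?_, by simp⟩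
    · intro h
      exact hne (congrArg Subtype.val (Sum.inl.inj h)).symm
    · rintro _ ⟨⟩
      exact hl ▸ hwl

lemma two_mul_card_le {q n k : ℕ} (hk : 1 ≤ k) (hkn : k < n) (C : Finset (Fin n → Fin q))
    (hC : ∀ u ∈ C, ∀ v ∈ C, ∀ w : List (Fin q), w.length = k →
      w.Sublist (List.ofFn u) → w.Sublist (List.ofFn v) → u = v) :
    2 * C.card ≤ q ^ k + q := by
  choose p r hp hne hr hc using fun u : Fin n → Fin q => exists_labels hk hkn u
  let f : C × Bool → List.Vector (Fin q) k ⊕ Fin q :=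
    fun x => bif x.2 then r x.1.1 else Sum.inl (p x.1.1)
  have hf : Function.Injective f := by
    -- A common label in `[q]^k` is a common subsequence, so it determines the codeword.
    have hpr : ∀ u ∈ C, ∀ v ∈ C, r u ≠ Sum.inl (p v) := by
      intro u hu v hv h
      have huv := hC u hu v hv _ (p v).2 (hr u _ h) (hp v)
      subst huv
      exact hne _ h
    rintro ⟨⟨u, hu⟩, b⟩ ⟨⟨v, hv⟩, b'⟩ h
    cases b <;> cases b' <;> simp only [f, cond_true, cond_false] at h
    · have h' := Sum.inl.inj h
      have huv := hC u hu v hv _ (p u).2 (hp u) (h' ▸ hp v)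
      subst huv
      rfl
    · exact absurd h.symm (hpr v hv u hu)
    · exact absurd h (hpr u hu v hv)
    · have huv : u = v := by
        cases hs : r u with
        | inl s => exact hC u hu v hv _ s.2 (hr u s hs) (hr v s (h ▸ hs))
        | inr a => rw [hc u a hs, hc v a (h ▸ hs)]
      subst huv
      rfl
  have := Fintype.card_le_of_injective f hf
  simp only [Fintype.card_prod, Fintype.card_coe, Fintype.card_bool, Fintype.card_sum,
    card_vector, Fintype.card_fin] at this
  omega

/-- For `q ≥ 2`, `n ≥ 3` and even `d` with `4 ≤ d ≤ 2n - 2`, one has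
`I_q(n,d) ≤ (q^(n - d/2 + 1) + q^(n - d/2))/2`. -/
theorem maxInsdelSize_upper_bound (q n d : ℕ) (hq : 2 ≤ q) (hn : 3 ≤ n)
    (hdev : 2 ∣ d) (hd4 : 4 ≤ d) (hdn : d ≤ 2 * n - 2) :
    maxInsdelSize q n d ≤ (q ^ (n - d / 2 + 1) + q ^ (n - d / 2)) / 2 := by
  refine csSup_le (Set.nonempty_of_mem (x := 0) ⟨∅, by simp⟩) ?_
  rintro _ ⟨C, rfl, hC⟩
  have hcard : 2 * C.card ≤ q ^ (n - d / 2 + 1) + q := by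
    apply two_mul_card_le (by omega) (by omega)
    intro u hu v hv w hw hwu hwv
    by_contra hne
    have h1 := hC u hu v hv hne
    have h2 := length_le_lcsLen hwu hwv
    unfold insdelDist at h1
    omega
  have hq' : q ≤ q ^ (n - d / 2) := Nat.le_self_pow (by omega) q
  omega
end

section
/- For all integers q ≥ 2, n ≥ 3 and every even integer d with 2q ≤ d ≤ 2n − 2, one has I_q(n, d) ≤ q^{n − d/2}. -/
/-!
Put `k = n - d/2`, so that `n ≥ k + q`, and two distinct codewords of a code with insdel distance
at least `d` have no common subsequence of length `k + 1`. Every word `u` of length `n` has a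
subsequence of the form `a a y`, where `y` is the suffix of `u` of length `k - 1`: the remaining
prefix has at least `q + 1` letters, so by pigeonhole some letter `a` occurs twice in it
(`exists_double_sublist`). Hence a codeword is determined by the word `a y` of length `k`, and
there are only `q ^ k` of these.
-/

open scoped BigOperators

/-- Every word of length `n ≥ k + q` over `q` letters has a subsequence of length `k + 1` whose
first two letters agree. -/
lemma exists_double_sublist {q n k : ℕ} (hk : 1 ≤ k) (hn : k + q ≤ n) (u : Fin n → Fin q) :
    ∃ (a : Fin q) (y : List (Fin q)), y.length + 1 = k ∧ (a :: a :: y).Sublist (List.ofFn u) := by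
  have hdup : ¬ ((List.ofFn u).take (n - (k - 1))).Nodup := by
    intro h
    have := h.length_le_card
    simp only [List.length_take, List.length_ofFn, Fintype.card_fin] at this
    omega
  rw [List.nodup_iff_sublist] at hdup
  push Not at hdup
  obtain ⟨a, ha⟩ := hdup
  refine ⟨a, (List.ofFn u).drop (n - (k - 1)), ?_, ?_⟩
  · simp only [List.length_drop, List.length_ofFn]
    omega
  · have h := ha.append (List.Sublist.refl ((List.ofFn u).drop (n - (k - 1))))
    rwa [List.take_append_drop] at h

/-- For `q ≥ 2`, `n ≥ 3` and even `d` with `2q ≤ d ≤ 2n - 2`, one has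
`I_q(n,d) ≤ q^(n - d/2)`. -/
theorem maxInsdelSize_upper_bound_large_d (q n d : ℕ) (hq : 2 ≤ q) (hn : 3 ≤ n)
    (hdev : 2 ∣ d) (hd2q : 2 * q ≤ d) (hdn : d ≤ 2 * n - 2) :
    maxInsdelSize q n d ≤ q ^ (n - d / 2) := by
  refine csSup_le' ?_
  rintro M ⟨C, rfl, hC⟩
  have hk : 1 ≤ n - d / 2 := by omega
  have hkn : n - d / 2 + q ≤ n := by omega
  choose a y hlen hsub using exists_double_sublist (q := q) hk hkn
  let f : (Fin n → Fin q) → List.Vector (Fin q) (n - d / 2) :=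
    fun u => ⟨a u :: y u, by simpa using hlen u⟩
  have hf : Set.InjOn f C := by
    intro u hu v hv huv
    by_contra hne
    have hd := hC u hu v hv hne
    have huv' : a u :: y u = a v :: y v := congrArg Subtype.val huv
    obtain ⟨ha, hy⟩ := List.cons.inj huv'
    have hv' := hsub v
    rw [← ha, ← hy] at hv'
    have hl := length_le_lcsLen (hsub u) hv'
    have := hlen u
    simp only [List.length_cons] at hl
    unfold insdelDist at hd
    omega
  calc C.card ≤ (Finset.univ : Finset (List.Vector (Fin q) (n - d / 2))).card :=
        Finset.card_le_card_of_injOn f (fun _ _ => Finset.mem_univ _) hf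
    _ = q ^ (n - d / 2) := by rw [Finset.card_univ, card_vector, Fintype.card_fin]
end

section
/- Let q be a prime power and let C ⊆ F_q^n be an F_q-linear code of dimension k whose insdel distance satisfies 4 ≤ d_I(C) ≤ 2n − 2. Then d_I(C) ≤ 2n − 2k. -/
/-!
The cases `k ≤ 1` are immediate from the hypothesis `d_I(C) ≤ 2n - 2`. For `k ≥ 2` put
`m = min k (n - 1)`. The pairs `(x, y) ∈ C × C` with `x i = y (i + 1)` for `i < m` and `x 0 = 0` are
cut out by `m + 1 < 2k` linear conditions, so there is a nonzero such pair. If `x ≠ y`, the prefix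
of length `m` of `x` is also a subsequence of `y`. If `x = y`, then `x` vanishes on its first
`m + 1` coordinates and is compared with the zero codeword instead. Either way two distinct
codewords have a common subsequence of length `m`, so `d_I(C) ≤ 2n - 2m`
(`insdelDistSet_le_of_lt`). When `m = n - 1` this says `d_I(C) ≤ 2`, which is excluded;
otherwise `m = k`.
-/

open scoped BigOperators

/-- If `u` agrees with the left shift of `v` on the first `m` coordinates, then these form a common
subsequence. -/
lemma le_lcsLen_of_shift {α : Type*} {n m : ℕ} (hm : m + 1 ≤ n) (u v : Fin n → α)
    (h : ∀ i : Fin m, u ⟨i, by omega⟩ = v ⟨i + 1, by omega⟩) : m ≤ lcsLen u v := by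
  refine le_csSup ⟨n, ?_⟩ ⟨(List.ofFn u).take m, ?_, List.take_sublist _ _, ?_⟩
  · rintro _ ⟨w, rfl, hw, -⟩
    simpa using hw.length_le
  · simp; omega
  · have : (List.ofFn u).take m = ((List.ofFn v).drop 1).take m := by
      apply List.ext_getElem
      · simp; omega
      · intro i h1 h2
        have hi : i < m := by simp at h1; omega
        simpa [Nat.add_comm] using h ⟨i, hi⟩
    rw [this]
    exact (List.take_sublist _ _).trans (List.drop_sublist _ _)

lemma insdelDistSet_le_of_shift {α : Type*} {n m : ℕ} (hm : m + 1 ≤ n) {C : Set (Fin n → α)}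
    {u v : Fin n → α} (hu : u ∈ C) (hv : v ∈ C) (huv : u ≠ v)
    (h : ∀ i : Fin m, u ⟨i, by omega⟩ = v ⟨i + 1, by omega⟩) :
    insdelDistSet C ≤ 2 * n - 2 * m := by
  have h1 : insdelDistSet C ≤ insdelDist u v := Nat.sInf_le ⟨u, hu, v, hv, huv, rfl⟩
  have h2 := le_lcsLen_of_shift hm u v h
  unfold insdelDist at h1
  omega

/-- The half-Singleton argument: when `m < n` and `2 * dim C > m + 1`, a dimension count yields two
distinct codewords with a common subsequence of length `m`, which bounds the insdel distance. -/
lemma insdelDistSet_le_of_lt {F : Type*} [Field F] {n m : ℕ} (hm : m + 1 ≤ n)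
    (C : Submodule F (Fin n → F)) (hk : m + 1 < 2 * Module.finrank F C) :
    insdelDistSet (C : Set (Fin n → F)) ≤ 2 * n - 2 * m := by
  let φ : (C × C) →ₗ[F] (Fin m → F) × F :=
    { toFun := fun p => (fun i => p.1.1 ⟨i, by omega⟩ - p.2.1 ⟨i + 1, by omega⟩,
        p.1.1 ⟨0, by omega⟩)
      map_add' := fun p p' => by
        ext <;> simp
        ring
      map_smul' := fun c p => by
        ext <;> simp
        ring }
  have hker : LinearMap.ker φ ≠ ⊥ := LinearMap.ker_ne_bot_of_finrank_lt (by simp; omega)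
  obtain ⟨⟨⟨x, hx⟩, ⟨y, hy⟩⟩, hp, hne⟩ := Submodule.exists_mem_ne_zero_of_ne_bot hker
  have hp' : φ (⟨x, hx⟩, ⟨y, hy⟩) = 0 := hp
  have h0 : x ⟨0, by omega⟩ = 0 := congrArg Prod.snd hp'
  have hs : ∀ i : Fin m, x ⟨i, by omega⟩ = y ⟨i + 1, by omega⟩ := fun i =>
    sub_eq_zero.mp (congrFun (congrArg Prod.fst hp') i)
  by_cases hxy : x = y
  · subst hxy
    have hz : ∀ i : ℕ, ∀ hi : i < m, x ⟨i, by omega⟩ = 0 := by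
      intro i
      induction i with
      | zero => exact fun _ => h0
      | succ j ih => exact fun hj => (hs ⟨j, by omega⟩).symm.trans (ih (by omega))
    refine insdelDistSet_le_of_shift hm hx C.zero_mem ?_ fun i => hz i i.2
    rintro rfl
    exact hne rfl
  · exact insdelDistSet_le_of_shift hm hx hy hxy hs

/-- Every `F_q`-linear `[n,k]` code `C` with `4 ≤ d_I(C) ≤ 2n - 2` satisfies
`d_I(C) ≤ 2n - 2k`. -/
theorem linear_insdel_bound (q n k : ℕ) (F : Type*) [Field F] [Fintype F]
    (hF : Fintype.card F = q)
    (C : Submodule F (Fin n → F)) (hk : Module.finrank F C = k)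
    (h4 : 4 ≤ insdelDistSet (C : Set (Fin n → F)))
    (h2n : insdelDistSet (C : Set (Fin n → F)) ≤ 2 * n - 2) :
    insdelDistSet (C : Set (Fin n → F)) ≤ 2 * n - 2 * k := by
  rcases Nat.lt_or_ge k 2 with h | h
  · omega
  · have := insdelDistSet_le_of_lt (m := min k (n - 1)) (by omega) C (by omega)
    omega
end

section
/- Let q be a prime power, k ≥ 3 an integer, and α_1, α_2, ..., α_n pairwise distinct elements of F_q with n ≥ k(k+1)/2 − 2. Then there exist two distinct tuples i = (i_1,...,i_{k−1}) and j = (j_1,...,j_{k−1}) of indices with 1 ≤ i_1 < i_2 < ... < i_{k−1} ≤ n and 1 ≤ j_1 < j_2 < ... < j_{k−1} ≤ n, such that j_ℓ < i_ℓ ≤ k(k+1)/2 − 2 for every ℓ = 1,...,k−1, and the (k−1)×(k−1) matrix over F_q whose (r,ℓ)-entry is α_{i_ℓ}^r − α_{j_ℓ}^r (for 1 ≤ r ≤ k−1, 1 ≤ ℓ ≤ k−1) is invertible. -/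
/-!
The tuples `i = (2, …, k)` and `j = (1, …, k - 1)` work for every choice of distinct `α`, and
`k ≤ k (k + 1) / 2 - 2` as soon as `k ≥ 3`. The columns of the matrix are then the consecutive
differences of the moment-curve points `(α_s, …, α_s ^ (k - 1))`, `s = 1, …, k`, so up to sign its
determinant is the Vandermonde determinant of `α_1, …, α_k`. Concretely, a vector `c` in the left
kernel gives a polynomial `∑ c_r X ^ r` of degree less than `k` without constant term that takes
one value at all `k` points, which forces `c = 0`.
-/

open scoped BigOperators

/-- The matrix of consecutive differences of the moment curve at distinct points is invertible. -/
lemma det_consecutive_differences_ne_zero {F : Type*} [Field F] (m : ℕ) (x : Fin (m + 1) → F)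
    (hx : Function.Injective x) :
    (Matrix.of fun r l : Fin m =>
      x l.succ ^ ((r : ℕ) + 1) - x l.castSucc ^ ((r : ℕ) + 1)).det ≠ 0 := by
  intro hdet
  obtain ⟨c, hc, hcM⟩ := Matrix.exists_vecMul_eq_zero_iff.mpr hdet
  apply hc
  set P : F → F := fun y => ∑ r : Fin m, y ^ ((r : ℕ) + 1) * c r with hP
  have hstep : ∀ l : Fin m, P (x l.succ) = P (x l.castSucc) := by
    intro l
    have h := congrFun hcM l
    simp only [Matrix.vecMul, dotProduct, Matrix.of_apply, Pi.zero_apply] at h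
    rw [← sub_eq_zero, hP, ← h, ← Finset.sum_sub_distrib]
    exact Finset.sum_congr rfl fun r _ => by ring
  have hconst : ∀ s : Fin (m + 1), P (x s) = P (x 0) := by
    intro s
    induction s using Fin.induction with
    | zero => rfl
    | succ l ih => rw [hstep, ih]
  -- The coefficient vector of `P - P (x 0)` is in the kernel of the Vandermonde matrix of `x`.
  have hv : (Fin.cons (-P (x 0)) c : Fin (m + 1) → F) = 0 := by
    refine Matrix.eq_zero_of_forall_index_sum_pow_mul_eq_zero hx fun s => ?_
    rw [Fin.sum_univ_succ]
    simp only [Fin.cons_zero, Fin.cons_succ, Fin.val_zero, Fin.val_succ, pow_zero, one_mul]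
    exact neg_add_eq_zero.mpr (hconst s).symm
  funext r
  simpa using congrFun hv r.succ

/-- Lemma 3.8: existence of increasing index tuples `i, j` with `j_ℓ < i_ℓ ≤ k(k+1)/2 - 2`
such that the matrix with entries `α_{i_ℓ}^r - α_{j_ℓ}^r` is invertible. -/
theorem exists_invertible_difference_matrix (q n k : ℕ) (F : Type*) [Field F] [Fintype F]
    (hF : Fintype.card F = q) (hk : 3 ≤ k)
    (α : Fin n → F) (hα : Function.Injective α)
    (hn : k * (k + 1) / 2 - 2 ≤ n) :
    ∃ i j : Fin (k - 1) → Fin n, StrictMono i ∧ StrictMono j ∧ i ≠ j ∧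
      (∀ ℓ : Fin (k - 1), j ℓ < i ℓ ∧ (i ℓ : ℕ) + 1 ≤ k * (k + 1) / 2 - 2) ∧
      (Matrix.of fun r ℓ : Fin (k - 1) =>
        α (i ℓ) ^ ((r : ℕ) + 1) - α (j ℓ) ^ ((r : ℕ) + 1)).det ≠ 0 := by
  obtain ⟨m, rfl⟩ : ∃ m, k = m + 1 := ⟨k - 1, by omega⟩
  have hbound : m + 1 ≤ (m + 1) * (m + 1 + 1) / 2 - 2 := by
    have h : m + 1 + 2 ≤ (m + 1) * (m + 1 + 1) / 2 := by
      rw [Nat.le_div_iff_mul_le two_pos]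
      nlinarith
    omega
  have hmn : m + 1 ≤ n := hbound.trans hn
  refine ⟨fun l => Fin.castLE hmn l.succ, fun l => Fin.castLE hmn l.castSucc, ?_, ?_, ?_, ?_, ?_⟩
  · exact (Fin.strictMono_castLE hmn).comp Fin.strictMono_succ
  · exact (Fin.strictMono_castLE hmn).comp Fin.strictMono_castSucc
  · intro h
    have h0 := congrArg Fin.val (congrFun h ⟨0, by omega⟩)
    simp at h0
  · intro l
    have hl : (l : ℕ) < m := l.isLt
    refine ⟨?_, ?_⟩
    · rw [Fin.lt_def]
      simp
    · simp only [Fin.val_castLE, Fin.val_succ]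
      omega
  · exact det_consecutive_differences_ne_zero m (fun s => α (Fin.castLE hmn s))
      (hα.comp (Fin.castLE_injective hmn))
end

section
/- Let q be a prime power and let k ≥ 3 and n be integers with n ≥ k(k+1)/2 + k − 3 and n ≤ q. Then for every choice of pairwise distinct evaluation points α_1,...,α_n ∈ F_q, the Reed-Solomon code RS_α(n,k) has insdel distance at most 2n − 4k + 4. -/
/-!
The code contains two distinct words with a common subsequence of length `2k - 2`, and this needs
only `n ≥ 2k - 1`, which follows from the hypothesis on `n` when `k ≥ 3`.

Number the evaluation points from `0` and let `h = ∏ (X - α_t)` over `k ≤ t < 2k - 1`, a nonzero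
polynomial of degree `k - 1`. By Lagrange interpolation at `α_0, …, α_{k-1}` there is `f` of degree
less than `k` with `f(α_{s+1}) = f(α_s) + h(α_{s+1})` for `s < k - 1`. Put `g = f - h`. Then
`f(α_s) = g(α_{s+1})` for `s < k - 1`, and `f(α_t) = g(α_t)` for `k ≤ t < 2k - 1`. So the word
`g(α_1), …, g(α_{2k-2})` also occurs in the codeword of `f`, at the positions
`0, …, k-2, k, …, 2k-2`. The codewords differ since `h(α_0) ≠ 0`.
-/

open scoped BigOperators

lemma ofFn_comp_sublist {A : Type*} {m n : ℕ} (u : Fin n → A) (e : Fin m → Fin n)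
    (he : StrictMono e) : (List.ofFn (fun s => u (e s))).Sublist (List.ofFn u) := by
  rw [List.sublist_iff_exists_fin_orderEmbedding_get_eq]
  refine ⟨OrderEmbedding.ofStrictMono
    (fun s => Fin.cast (List.length_ofFn).symm (e (Fin.cast List.length_ofFn s))) ?_, ?_⟩
  · intro s t hst
    exact he hst
  · intro s
    simp only [List.get_ofFn]
    rfl

lemma le_lcsLen {A : Type*} {m n : ℕ} (u v : Fin n → A) (e e' : Fin m → Fin n)
    (he : StrictMono e) (he' : StrictMono e') (h : ∀ s, u (e s) = v (e' s)) :
    m ≤ lcsLen u v := by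
  refine le_csSup ⟨n, ?_⟩ ⟨List.ofFn (fun s => u (e s)), by simp, ofFn_comp_sublist u e he, ?_⟩
  · rintro _ ⟨w, rfl, hw, -⟩
    simpa using hw.length_le
  · simp only [h]
    exact ofFn_comp_sublist v e' he'

/-- The two polynomials `f` and `g = f - h` described at the top. -/
lemma exists_shifted_pair {F : Type*} [Field F] {n k : ℕ} (hk : 1 ≤ k) (hn : 2 * k - 1 ≤ n)
    (a : ℕ → F) (ha : Set.InjOn a (Set.Iio n)) :
    ∃ f g : Polynomial F, f.degree < k ∧ g.degree < k ∧ f.eval (a 0) ≠ g.eval (a 0) ∧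
      (∀ s < k - 1, f.eval (a s) = g.eval (a (s + 1))) ∧
      ∀ t, k ≤ t → t < 2 * k - 1 → f.eval (a t) = g.eval (a t) := by
  classical
  set h : Polynomial F :=
    ∏ t ∈ Finset.Ico k (2 * k - 1), (Polynomial.X - Polynomial.C (a t)) with hh
  have hdeg : h.degree < k := by
    rw [hh, Polynomial.degree_prod]
    simp only [Polynomial.degree_X_sub_C, Finset.sum_const, Nat.card_Ico, nsmul_eq_mul, mul_one]
    exact_mod_cast (by omega : 2 * k - 1 - k < k)
  have hinj : Set.InjOn a (Finset.range k : Set ℕ) := by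
    refine ha.mono fun x hx => ?_
    simp only [Finset.coe_range, Set.mem_Iio] at hx ⊢
    omega
  set r : ℕ → F := fun s => ∑ i ∈ Finset.range s, h.eval (a (i + 1)) with hr
  set f := Lagrange.interpolate (Finset.range k) a r with hf
  have hfdeg : f.degree < k := by
    have := Lagrange.degree_interpolate_lt r hinj
    rwa [Finset.card_range] at this
  have hfe : ∀ s < k, f.eval (a s) = r s := fun s hs =>
    Lagrange.eval_interpolate_at_node r hinj (Finset.mem_range.2 hs)
  refine ⟨f, f - h, hfdeg, (Polynomial.degree_sub_le _ _).trans_lt (max_lt hfdeg hdeg),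
    ?_, ?_, ?_⟩
  · rw [Polynomial.eval_sub, ne_eq, eq_comm, sub_eq_self, hh, Polynomial.eval_prod,
      Finset.prod_eq_zero_iff]
    rintro ⟨t, ht, h0⟩
    rw [Finset.mem_Ico] at ht
    simp only [Polynomial.eval_sub, Polynomial.eval_X, Polynomial.eval_C, sub_eq_zero] at h0
    have := ha (Set.mem_Iio.2 (by omega)) (Set.mem_Iio.2 (by omega)) h0
    omega
  · intro s hs
    rw [Polynomial.eval_sub, hfe s (by omega), hfe (s + 1) (by omega), hr]
    simp [Finset.sum_range_succ]
  · intro t h1 h2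
    rw [Polynomial.eval_sub, eq_comm, sub_eq_self, hh, Polynomial.eval_prod]
    exact Finset.prod_eq_zero (Finset.mem_Ico.2 ⟨h1, h2⟩) (by simp)

/-- Theorem 3.9: if `k ≥ 3` and `n ≥ k(k+1)/2 + k - 3`, every `[n,k]` Reed-Solomon code
has insdel distance at most `2n - 4k + 4`. -/
theorem rs_insdel_upper_bound (q n k : ℕ) (F : Type*) [Field F] [Fintype F]
    (hF : Fintype.card F = q) (hk : 3 ≤ k)
    (hn : k * (k + 1) / 2 + k - 3 ≤ n) (hnq : n ≤ q)
    (α : Fin n → F) (hα : Function.Injective α) :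
    insdelDistSet {c : Fin n → F |
        ∃ f : Polynomial F, f.degree < (k : ℕ) ∧ c = fun t => f.eval (α t)}
      ≤ 2 * n - 4 * k + 4 := by
  have hn' : 2 * k - 1 ≤ n := by
    have : k + 2 ≤ k * (k + 1) / 2 := by
      rw [Nat.le_div_iff_mul_le two_pos]
      nlinarith
    omega
  -- `α` extended by zero, so that positions can be computed in `ℕ`
  set a : ℕ → F := fun t => if ht : t < n then α ⟨t, ht⟩ else 0 with ha
  have haα : ∀ t : Fin n, a t = α t := fun t => by simp [ha]
  have hinj : Set.InjOn a (Set.Iio n) := by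
    intro x hx y hy hxy
    have := hα ((haα ⟨x, hx⟩).symm.trans (hxy.trans (haα ⟨y, hy⟩)))
    exact congrArg Fin.val this
  obtain ⟨f, g, hf, hg, hne, hlow, hhigh⟩ := exists_shifted_pair (by omega) hn' a hinj
  have hlcs : 2 * k - 2 ≤ lcsLen (fun t => f.eval (α t)) (fun t => g.eval (α t)) := by
    refine le_lcsLen _ _
      (fun s : Fin (2 * k - 2) => ⟨if (s : ℕ) < k - 1 then s else s + 1, by split <;> omega⟩)
      (fun s : Fin (2 * k - 2) => ⟨s + 1, by omega⟩) ?_ ?_ ?_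
    · intro s t hst
      simp only [Fin.lt_def] at hst ⊢
      split_ifs <;> omega
    · intro s t hst
      simp only [Fin.lt_def] at hst ⊢
      omega
    · intro s
      simp only [← haα]
      split_ifs with hs
      · exact hlow s hs
      · exact hhigh _ (by omega) (by omega)
  have hle : insdelDist (fun t => f.eval (α t)) (fun t => g.eval (α t)) ≤ 2 * n - 4 * k + 4 := by
    unfold insdelDist
    omega
  refine le_trans (Nat.sInf_le ?_) hle
  refine ⟨_, ⟨f, hf, rfl⟩, _, ⟨g, hg, rfl⟩, fun hfg => hne ?_, rfl⟩
  have := congrFun hfg ⟨0, by omega⟩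
  simpa only [← haα] using this
end

section
/- Let C ⊆ Z_q^n be a q-ary Hamming-metric Singleton-optimal code, i.e., |C| = q^{n − d_H(C) + 1}, and set k = n − d_H(C) + 1 (so |C| = q^k). Suppose C contains the zero vector. Then for every subset R ⊆ {1,...,n} with |R| = n − k + 1, there are exactly q − 1 codewords of C whose support is exactly R. -/
/-!
Let `d` be the minimum distance, so that `k = n - d + 1` and `R` has `d` elements. Two distinct
codewords cannot agree on `k` coordinates, since they would then differ in at most `n - k = d - 1`
places. Hence projection of `C` onto any `k` coordinates is injective, and by `|C| = q ^ k` it is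
bijective (`exists_codeword_of_card_eq`).

Fix `i₀ ∈ R` and project onto the `k` coordinates `Rᶜ ∪ {i₀}`: for every `a` there is exactly one
codeword vanishing off `R` with value `a` at `i₀`. If `a ≠ 0`, this codeword is nonzero, so it has
weight at least `d = |R|` and its support is all of `R`. Thus `c ↦ c i₀` is a bijection from the
codewords with support `R` onto the nonzero elements of `ZMod q`.
-/

open scoped BigOperators

theorem hammingDistSet_le {α : Type*} {n : ℕ} [DecidableEq α] {C : Set (Fin n → α)}
    {u v : Fin n → α} (hu : u ∈ C) (hv : v ∈ C) (huv : u ≠ v) :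
    hammingDistSet C ≤ hammingDist u v :=
  Nat.sInf_le ⟨u, hu, v, hv, huv, rfl⟩

/-- The minimum is attained once the code has two distinct words; this excludes the junk value
`sInf ∅ = 0`. -/
theorem hammingDistSet_pos_and_le {α : Type*} {n : ℕ} [DecidableEq α] {C : Set (Fin n → α)}
    (hC : C.Nontrivial) : 0 < hammingDistSet C ∧ hammingDistSet C ≤ n := by
  obtain ⟨u, hu, v, hv, huv⟩ := hC
  constructor
  · obtain ⟨x, _, y, _, hxy, h⟩ :=
      Nat.sInf_mem (s := {d : ℕ | ∃ u ∈ C, ∃ v ∈ C, u ≠ v ∧ hammingDist u v = d})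
        ⟨_, u, hu, v, hv, huv, rfl⟩
    unfold hammingDistSet
    rw [← h]
    exact hammingDist_pos.2 hxy
  · refine (hammingDistSet_le hu hv huv).trans ?_
    simpa using hammingDist_le_card_fintype (x := u) (y := v)

theorem eq_of_eqOn_of_lt {α : Type*} {n : ℕ} [DecidableEq α] {C : Set (Fin n → α)}
    {T : Finset (Fin n)} (hT : n < T.card + hammingDistSet C) {u v : Fin n → α}
    (hu : u ∈ C) (hv : v ∈ C) (h : ∀ i ∈ T, u i = v i) : u = v := by
  by_contra huv
  have h1 := hammingDistSet_le hu hv huv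
  have h2 : hammingDist u v ≤ Tᶜ.card := by
    refine Finset.card_le_card fun i hi => ?_
    simp only [Finset.mem_filter, Finset.mem_univ, true_and, Finset.mem_compl] at hi ⊢
    exact fun hiT => hi (h i hiT)
  have h3 := T.card_add_card_compl
  rw [Fintype.card_fin] at h3
  omega

/-- In a Singleton-optimal code, any `k` coordinates can be prescribed arbitrarily: the projection
onto them is injective between sets of the same size `q ^ k`. -/
theorem exists_codeword_of_card_eq {α : Type*} {n : ℕ} [DecidableEq α] [Fintype α]
    {C : Finset (Fin n → α)} {T : Finset (Fin n)}
    (hT : n < T.card + hammingDistSet (C : Set (Fin n → α)))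
    (hCard : C.card = Fintype.card α ^ T.card) (f : Fin n → α) :
    ∃ c ∈ C, ∀ i ∈ T, c i = f i := by
  let π : C → (T → α) := fun c i => c.1 i
  have hinj : Function.Injective π := fun u v huv =>
    Subtype.ext <| eq_of_eqOn_of_lt hT u.2 v.2 fun i hi => congrFun huv ⟨i, hi⟩
  have hbij : Function.Bijective π :=
    (Fintype.bijective_iff_injective_and_card π).2 ⟨hinj, by simp [hCard]⟩
  obtain ⟨c, hc⟩ := hbij.2 fun i => f i
  exact ⟨c.1, c.2, fun i hi => congrFun hc ⟨i, hi⟩⟩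

/-- Lemma 3.10: in a `q`-ary Hamming-metric Singleton-optimal code containing `0`,
for every coordinate set `R` of size `n - k + 1` there are exactly `q - 1` codewords
with support exactly `R`. -/
theorem singleton_optimal_support_count (q n k : ℕ) (hq : 2 ≤ q)
    (C : Finset (Fin n → ZMod q))
    (hzero : (0 : Fin n → ZMod q) ∈ C)
    (hk : k = n - hammingDistSet (C : Set (Fin n → ZMod q)) + 1)
    (hCard : C.card = q ^ k)
    (R : Finset (Fin n)) (hR : R.card = n - k + 1) :
    Set.ncard {c ∈ (C : Set (Fin n → ZMod q)) | ∀ i, (c i ≠ 0 ↔ i ∈ R)} = q - 1 := by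
  have : NeZero q := ⟨by omega⟩
  have hntriv : (C : Set (Fin n → ZMod q)).Nontrivial := by
    refine Finset.one_lt_card_iff_nontrivial.1 ?_
    rw [hCard]
    exact Nat.one_lt_pow (by omega) (by omega)
  obtain ⟨hd0, hdn⟩ := hammingDistSet_pos_and_le hntriv
  have hRpos : 0 < R.card := by omega
  obtain ⟨i₀, hi₀⟩ := Finset.card_pos.1 hRpos
  have hT : (insert i₀ Rᶜ).card = k := by
    rw [Finset.card_insert_of_notMem (by simpa using hi₀), Finset.card_compl, Fintype.card_fin]
    omega
  have hlt : n < (insert i₀ Rᶜ).card + hammingDistSet (C : Set (Fin n → ZMod q)) := by omega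
  have hbij : Set.BijOn (fun c : Fin n → ZMod q => c i₀)
      {c ∈ (C : Set (Fin n → ZMod q)) | ∀ i, (c i ≠ 0 ↔ i ∈ R)} {0}ᶜ := by
    refine ⟨fun c hc => (hc.2 i₀).2 hi₀, fun u hu v hv huv => ?_, fun a ha => ?_⟩
    · refine eq_of_eqOn_of_lt hlt hu.1 hv.1 fun i hi => ?_
      rcases Finset.mem_insert.1 hi with rfl | hi
      · exact huv
      · rw [Finset.mem_compl] at hi
        rw [not_not.1 (mt (hu.2 i).1 hi), not_not.1 (mt (hv.2 i).1 hi)]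
    · obtain ⟨c, hcC, hc⟩ := exists_codeword_of_card_eq hlt
        (by rw [hT, ZMod.card, hCard]) (Pi.single i₀ a)
      have hca : c i₀ = a := by simpa using hc i₀ (Finset.mem_insert_self _ _)
      have hsub : Finset.univ.filter (fun i => c i ≠ (0 : Fin n → ZMod q) i) ⊆ R := by
        intro i hi
        by_contra hiR
        have hne : i ≠ i₀ := fun h => hiR (h ▸ hi₀)
        have := hc i (Finset.mem_insert_of_mem (Finset.mem_compl.2 hiR))
        rw [Pi.single_eq_of_ne hne] at this
        exact (Finset.mem_filter.1 hi).2 this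
      have hc0 : c ≠ 0 := fun h => ha (by rw [← hca, h]; rfl)
      -- The weight of `c` is at least `d = |R|`, which upgrades `supp c ⊆ R` to an equality.
      have hw := hammingDistSet_le (C := (C : Set (Fin n → ZMod q))) hcC hzero hc0
      have heq := Finset.eq_of_subset_of_card_le hsub (by unfold hammingDist at hw; omega)
      refine ⟨c, ⟨hcC, fun i => ?_⟩, hca⟩
      rw [← heq]
      simp
  rw [← hbij.injOn.ncard_image, hbij.image_eq, Set.ncard_compl]
  simp
end

section
/- For any a, b ∈ J_q(n), the L¹-distance equals the insdel distance of the images under ψ: d_L(a, b) = d_I(ψ(a), ψ(b)). -/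
/-!
The longest common subsequence of `ψ(a)` and `ψ(b)` has length `∑ min (a i) (b i)`. It is attained
by the sorted word with `min (a i) (b i)` copies of each symbol `i` (`psiList_sublist`), and it
cannot be exceeded, because a common subsequence contains each symbol `i` at most
`min (a i) (b i)` times (`count_psiList`). The identity then follows by summing
`|x - y| + 2 min(x, y) = x + y` over the coordinates.
-/


open scoped BigOperators

/-- The list consisting of `a 0` copies of `0`, then `a 1` copies of `1`, etc. -/
def psiList (q : ℕ) (a : Fin q → ℕ) : List (Fin q) :=
  (List.ofFn fun i : Fin q => List.replicate (a i) i).flatten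

theorem psiList_length {q n : ℕ} (a : Fin q → ℕ) (ha : ∑ i, a i = n) :
    (psiList q a).length = n := by
  simp [psiList, Function.comp_def, List.sum_ofFn, ha]

/-- The map `ψ : J_q(n) → [q]^n` sending `(a_1,…,a_q)` to the nondecreasing word with
`a_i` copies of the symbol `i`. -/
def psi {q n : ℕ} (a : Fin q → ℕ) (ha : ∑ i, a i = n) : Fin n → Fin q :=
  fun j => (psiList q a).get (Fin.cast (psiList_length a ha).symm j)

theorem ofFn_psi {q n : ℕ} (a : Fin q → ℕ) (ha : ∑ i, a i = n) :
    List.ofFn (psi a ha) = psiList q a := by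
  apply List.ext_getElem
  · simp [psiList_length a ha]
  · intro i h1 h2
    simp [psi]

theorem count_psiList {q : ℕ} (a : Fin q → ℕ) (i : Fin q) :
    (psiList q a).count i = a i := by
  simp [psiList, List.count_flatten, List.map_ofFn, Function.comp_def, List.sum_ofFn,
    List.count_replicate]

theorem psiList_sublist {q : ℕ} {c a : Fin q → ℕ} (h : ∀ i, c i ≤ a i) :
    (psiList q c).Sublist (psiList q a) := by
  have key : ∀ l : List (Fin q),
      ((l.map fun i => List.replicate (c i) i).flatten).Sublist
        ((l.map fun i => List.replicate (a i) i).flatten) := by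
    intro l
    induction l with
    | nil => simp
    | cons x l ih =>
      simpa using ((List.replicate_sublist_replicate x).2 (h x)).append ih
  simpa [psiList, List.ofFn_eq_map] using key (List.finRange q)

theorem lcsLen_psi {q n : ℕ} (a b : Fin q → ℕ) (ha : ∑ i, a i = n) (hb : ∑ i, b i = n) :
    lcsLen (psi a ha) (psi b hb) = ∑ i, min (a i) (b i) := by
  unfold lcsLen
  rw [ofFn_psi, ofFn_psi]
  apply IsGreatest.csSup_eq
  constructor
  · exact ⟨psiList q fun i => min (a i) (b i), psiList_length _ rfl,
      psiList_sublist fun i => min_le_left _ _, psiList_sublist fun i => min_le_right _ _⟩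
  · rintro _ ⟨w, rfl, hwa, hwb⟩
    have hw : w.length = ∑ i, w.count i := by
      simpa using (Multiset.sum_count_eq_card (s := Finset.univ) (m := (w : Multiset (Fin q)))
        (fun _ _ => Finset.mem_univ _)).symm
    rw [hw]
    refine Finset.sum_le_sum fun i _ => le_min ?_ ?_
    · simpa [count_psiList] using hwa.count_le i
    · simpa [count_psiList] using hwb.count_le i

/-- Lemma 4.1: for `a, b ∈ J_q(n)`, the `L¹`-distance equals the insdel distance of the
images under `ψ`. -/
theorem L1_dist_eq_insdel_psi (q n : ℕ) (hq : 2 ≤ q) (hn : 1 ≤ n)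
    (a b : Fin q → ℕ) (ha : ∑ i, a i = n) (hb : ∑ i, b i = n) :
    ∑ i, Nat.dist (a i) (b i) = insdelDist (psi a ha) (psi b hb) := by
  have h : ∑ i, Nat.dist (a i) (b i) + 2 * ∑ i, min (a i) (b i) = 2 * n := by
    have h2 : 2 * n = ∑ i, a i + ∑ i, b i := by omega
    rw [h2, Finset.mul_sum, ← Finset.sum_add_distrib, ← Finset.sum_add_distrib]
    refine Finset.sum_congr rfl fun i _ => ?_
    unfold Nat.dist
    omega
  rw [insdelDist, lcsLen_psi]
  omega
end

section
/- Let q ≥ 2 be an integer and let r be a prime power with r > q. Then for any integers n ≥ 1 and δ ≥ 2, there exists a constant-weight L¹-code A ⊆ J_q(n) of size |A| ≥ C(n+q−1, n) / (r^{δ−2}(r−1)) (where C(a,b) is the binomial coefficient) whose L¹-distance between any two distinct elements is at least 2δ. -/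
open scoped BigOperators

open Polynomial

/-!
Fix a field `F` with `r` elements and distinct nonzero `α₁, …, α_q ∈ F`, which exist since
`q ≤ r - 1`. Attach to `a ∈ J_q(n)` the polynomial `P_a = ∏ (X - αᵢ)^{aᵢ}`, and sort the
elements of `J_q(n)` by the residue of `P_a` modulo `X^{δ-1}`. This residue is a unit of
`F[X]/(X^{δ-1})`, i.e. a truncated polynomial with nonzero constant coefficient, so there are
`(r-1) r^{δ-2}` classes, and by pigeonhole one class is as large as required.

If `a, b` lie in the same class, cancel the common factor `∏ (X - αᵢ)^{min(aᵢ, bᵢ)}` (coprime to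
`X`) to get `f ≡ g mod X^{δ-1}`, where `f = ∏ (X - αᵢ)^{aᵢ - bᵢ}` and `g = ∏ (X - αᵢ)^{bᵢ - aᵢ}`
with truncated exponents. Both are monic of degree `d`, half the `L¹`-distance of `a` and `b`, so
`f - g` has degree `< d`. If `d < δ` this forces `f = g`; as `f` and `g` share no root, `a = b`.
-/

/-- The polynomial `∏ (X - αᵢ)^{aᵢ}` attached to the exponent vector `a`. -/
noncomputable def codePoly {F : Type*} [Field F] {q : ℕ} (α : Fin q → F) (a : Fin q → ℕ) : F[X] :=
  ∏ i, (X - C (α i)) ^ a i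

section codePoly

variable {F : Type*} [Field F] {q : ℕ} (α : Fin q → F)

lemma codePoly_monic (a : Fin q → ℕ) : (codePoly α a).Monic :=
  monic_prod_of_monic _ _ fun i _ => (monic_X_sub_C (α i)).pow (a i)

lemma codePoly_natDegree (a : Fin q → ℕ) : (codePoly α a).natDegree = ∑ i, a i := by
  unfold codePoly
  rw [natDegree_prod_of_monic _ _ fun i _ => (monic_X_sub_C (α i)).pow (a i)]
  simp

lemma codePoly_add (a b : Fin q → ℕ) :
    codePoly α (fun i => a i + b i) = codePoly α a * codePoly α b := by
  simp [codePoly, pow_add, Finset.prod_mul_distrib]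

lemma codePoly_eval_zero_ne (hα : ∀ i, α i ≠ 0) (a : Fin q → ℕ) :
    (codePoly α a).eval 0 ≠ 0 := by
  simp only [codePoly, eval_prod, eval_pow, eval_sub, eval_X, eval_C, zero_sub]
  exact Finset.prod_ne_zero_iff.mpr fun i _ => pow_ne_zero _ (neg_ne_zero.mpr (hα i))

lemma codePoly_isRoot_iff (hα : Function.Injective α) (a : Fin q → ℕ) (i : Fin q) :
    (codePoly α a).eval (α i) = 0 ↔ a i ≠ 0 := by
  simp only [codePoly, eval_prod, eval_pow, eval_sub, eval_X, eval_C, Finset.prod_eq_zero_iff,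
    Finset.mem_univ, true_and, pow_eq_zero_iff', sub_eq_zero]
  constructor
  · rintro ⟨j, hj, h⟩
    rwa [hα hj]
  · exact fun h => ⟨i, rfl, h⟩

/-- Exponent vectors of equal weight whose polynomials agree modulo `X ^ k` are either equal or
at one-sided distance `∑ (aᵢ - bᵢ)⁺` greater than `k`. -/
lemma eq_of_X_pow_dvd (hα : Function.Injective α) (hα0 : ∀ i, α i ≠ 0) (a b : Fin q → ℕ) (k : ℕ)
    (hsum : ∑ i, (a i - b i) = ∑ i, (b i - a i)) (hk : ∑ i, (a i - b i) ≤ k)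
    (h : X ^ k ∣ codePoly α a - codePoly α b) : a = b := by
  set f := codePoly α fun i => a i - b i with hf
  set g := codePoly α fun i => b i - a i with hg
  set m := codePoly α fun i => min (a i) (b i) with hm
  have ha : codePoly α a = m * f := by
    rw [hm, hf, ← codePoly_add]
    congr 1
    funext i
    omega
  have hb : codePoly α b = m * g := by
    rw [hm, hg, ← codePoly_add]
    congr 1
    funext i
    omega
  rw [ha, hb, ← mul_sub] at h
  have hcop : IsCoprime (X ^ k : F[X]) m := by
    apply IsCoprime.pow_left
    refine (irreducible_X.coprime_iff_not_dvd).mpr fun hd => ?_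
    rw [X_dvd_iff, coeff_zero_eq_eval_zero] at hd
    exact codePoly_eval_zero_ne α hα0 _ hd
  have hdvd := hcop.dvd_of_dvd_mul_left h
  have hfg : f = g := by
    by_contra hne
    have hfm : f.Monic := codePoly_monic α _
    have hgm : g.Monic := codePoly_monic α _
    have hnd : f.natDegree = ∑ i, (a i - b i) := codePoly_natDegree α _
    have hnd' : g.natDegree = ∑ i, (b i - a i) := codePoly_natDegree α _
    have hdeg : (f - g).degree < f.degree := by
      refine degree_sub_lt_left ?_ hfm.ne_zero (by rw [hfm.leadingCoeff, hgm.leadingCoeff])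
      rw [degree_eq_natDegree hfm.ne_zero, degree_eq_natDegree hgm.ne_zero, hnd, hnd', hsum]
    have hlt := natDegree_lt_natDegree (sub_ne_zero.mpr hne) hdeg
    have hle := natDegree_le_of_dvd hdvd (sub_ne_zero.mpr hne)
    rw [natDegree_X_pow] at hle
    omega
  funext i
  have e := codePoly_isRoot_iff α hα (fun i => a i - b i) i
  have e' := codePoly_isRoot_iff α hα (fun i => b i - a i) i
  rw [← hf, hfg, hg, e'] at e
  omega

end codePoly

lemma dist_sum_eq {q : ℕ} (a b : Fin q → ℕ) :
    ∑ i, Nat.dist (a i) (b i) = ∑ i, (a i - b i) + ∑ i, (b i - a i) := by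
  simp [Nat.dist, Finset.sum_add_distrib]

lemma sum_sub_eq_of_sum_eq {q : ℕ} (a b : Fin q → ℕ) (h : ∑ i, a i = ∑ i, b i) :
    ∑ i, (a i - b i) = ∑ i, (b i - a i) := by
  have : ∑ i, (a i - b i) + ∑ i, b i = ∑ i, (b i - a i) + ∑ i, a i := by
    rw [← Finset.sum_add_distrib, ← Finset.sum_add_distrib]
    exact Finset.sum_congr rfl fun i _ => by omega
  omega

/-- Lemma 4.3: for a prime power `r > q`, there is a constant-weight `L¹`-code in `J_q(n)`
of size at least `C(n+q-1, n)/(r^(δ-2)(r-1))` and minimum `L¹`-distance at least `2δ`. -/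
theorem exists_constant_weight_L1_code (q r n δ : ℕ) (hq : 2 ≤ q) (hr : q < r)
    (hrpp : ∃ p m : ℕ, p.Prime ∧ 0 < m ∧ r = p ^ m)
    (hn : 1 ≤ n) (hδ : 2 ≤ δ) :
    ∃ A : Finset (Fin q → ℕ), (∀ a ∈ A, ∑ i, a i = n) ∧
      ((Nat.choose (n + q - 1) n : ℝ)) / ((r : ℝ) ^ (δ - 2) * ((r : ℝ) - 1)) ≤ (A.card : ℝ) ∧
      ∀ a ∈ A, ∀ b ∈ A, a ≠ b → 2 * δ ≤ ∑ i, Nat.dist (a i) (b i) := by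
  classical
  obtain ⟨p, m, hp, hm, rfl⟩ := hrpp
  have : Fact p.Prime := ⟨hp⟩
  obtain ⟨F, _, _, hF⟩ : ∃ (F : Type) (_ : Field F) (_ : Fintype F), Fintype.card F = p ^ m :=
    ⟨GaloisField p m, inferInstance, Fintype.ofFinite _,
      Fintype.card_eq_nat_card.trans (GaloisField.card p m hm.ne')⟩
  have hU : Fintype.card Fˣ = p ^ m - 1 := by rw [Fintype.card_units, hF]
  obtain ⟨u⟩ : Nonempty (Fin q ↪ Fˣ) :=
    Function.Embedding.nonempty_of_card_le (by rw [hU, Fintype.card_fin]; omega)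
  let α : Fin q → F := fun i => u i
  have hα : Function.Injective α := fun i j h => u.injective (Units.ext h)
  have hα0 : ∀ i, α i ≠ 0 := fun i => (u i).ne_zero
  -- The residue modulo `X ^ (δ - 1)`: the (nonzero) constant coefficient, then the other `δ - 2`.
  let Φ : (Fin q → ℕ) → Fˣ × (Fin (δ - 2) → F) := fun a =>
    (Units.mk0 _ (codePoly_eval_zero_ne α hα0 a), fun j => (codePoly α a).coeff (j + 1))
  have hΦ : ∀ a b, Φ a = Φ b → X ^ (δ - 1) ∣ codePoly α a - codePoly α b := by
    intro a b h
    obtain ⟨h0, h1⟩ := Prod.ext_iff.mp h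
    rw [X_pow_dvd_iff]
    rintro (_ | d) hd
    · rw [coeff_sub, coeff_zero_eq_eval_zero, coeff_zero_eq_eval_zero, sub_eq_zero]
      exact congrArg Units.val h0
    · rw [coeff_sub, sub_eq_zero]
      exact congrFun h1 ⟨d, by omega⟩
  have hr1 : (0 : ℝ) < ((p ^ m : ℕ) : ℝ) - 1 := by
    have : (1 : ℝ) < ((p ^ m : ℕ) : ℝ) := by exact_mod_cast (by omega : 1 < p ^ m)
    linarith
  have hcard : ((Finset.univ : Finset (Fˣ × (Fin (δ - 2) → F))).card : ℝ)
      = ((p ^ m : ℕ) : ℝ) ^ (δ - 2) * (((p ^ m : ℕ) : ℝ) - 1) := by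
    rw [Finset.card_univ, Fintype.card_prod, hU, Fintype.card_fun, hF, Fintype.card_fin,
      Nat.cast_mul, Nat.cast_sub (by omega), mul_comm]
    simp
  have hJ : (Finset.piAntidiag (Finset.univ : Finset (Fin q)) n).card = (n + q - 1).choose n := by
    let e : Sym (Fin q) n ≃ Finset.piAntidiag (Finset.univ : Finset (Fin q)) n :=
      (Sym.equivNatSumOfFintype (Fin q) n).trans
        (Equiv.subtypeEquivRight fun P => by simp [Finset.mem_piAntidiag])
    rw [← Fintype.card_coe, ← Fintype.card_congr e, Sym.card_sym_eq_choose, Fintype.card_fin,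
      add_comm]
  obtain ⟨y, -, hy⟩ := Finset.exists_le_card_fiber_of_nsmul_le_card_of_maps_to
    (s := Finset.piAntidiag (Finset.univ : Finset (Fin q)) n)
    (t := (Finset.univ : Finset (Fˣ × (Fin (δ - 2) → F)))) (f := Φ)
    (b := ((Nat.choose (n + q - 1) n : ℝ)) /
      (((p ^ m : ℕ) : ℝ) ^ (δ - 2) * (((p ^ m : ℕ) : ℝ) - 1)))
    (fun _ _ => Finset.mem_univ _) Finset.univ_nonempty (by
      have : (0 : ℝ) < ((p ^ m : ℕ) : ℝ) ^ (δ - 2) * (((p ^ m : ℕ) : ℝ) - 1) :=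
        mul_pos (pow_pos (by linarith) _) hr1
      rw [nsmul_eq_mul, hcard, hJ, mul_div_cancel₀ _ this.ne'])
  refine ⟨_, fun a ha => ?_, hy, fun a ha b hb hab => ?_⟩
  · simp only [Finset.mem_filter, Finset.mem_piAntidiag] at ha
    exact ha.1.1
  · simp only [Finset.mem_filter, Finset.mem_piAntidiag] at ha hb
    have hsum := sum_sub_eq_of_sum_eq a b (ha.1.1.trans hb.1.1.symm)
    rw [dist_sum_eq, ← hsum]
    by_contra hlt
    exact hab (eq_of_X_pow_dvd α hα hα0 a b (δ - 1) hsum (by omega)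
      (hΦ a b (ha.2.trans hb.2.symm)))
end

section
/- For any integers q ≥ 2 and n ≥ δ ≥ 2, there exists a code C ⊆ [q]^n of size |C| ≥ C(n+q−1, n) / ((2q+2)^{δ−2}(2q+1)) (where C(a,b) is the binomial coefficient) whose insdel distance between any two distinct codewords is at least 2δ. -/
/-!
There are `C(n+q-1, n)` multisets of `n` letters, and choosing one word with each such multiset as
its letter content embeds them into the words of length `n`. The letters of a common subsequence
of two words form a common sub-multiset of their contents.
It therefore suffices to find many multisets of size `n` on `q` letters, no two distinct ones of
which share a sub-multiset of size at least `n - h`, where `h = δ - 1`.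

By Bertrand's postulate there is a prime `p` with `q < p ≤ 2q`, so that the letters embed as
nonzero elements of `ZMod p`. Attach to a multiset `A` the polynomial `P_A = ∏_{a ∈ A} (X - a)`
and record its residue modulo `X ^ h`, which takes at most `p ^ h ≤ (2q) ^ (δ - 1)` values. If
`P_A ≡ P_B` and `A`, `B` share a sub-multiset `W` with `|A| ≤ |W| + h`, then `P_W` is coprime to
`X`, so it cancels (`eq_of_X_pow_dvd_sub`): the remaining two polynomials are monic of the same
degree at most `h` and congruent modulo `X ^ h`, hence equal, and unique factorisation gives
`A = B`. The most popular residue class, with one word chosen for each multiset, is the code.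
-/

open scoped BigOperators

open Polynomial in
/-- The residue of `∏ (X - a)` modulo `X ^ h` determines the multiset `A` among those of the
same size that share with it a sub-multiset of at least `|A| - h` nonzero elements. -/
lemma eq_of_X_pow_dvd_sub {F : Type*} [Field F] {h : ℕ} {A B W : Multiset F}
    (hAB : A.card = B.card) (hWA : W ≤ A) (hWB : W ≤ B) (h0 : (0 : F) ∉ W)
    (hW : A.card ≤ W.card + h)
    (hdvd : (X : F[X]) ^ h ∣ (A.map (fun a => X - C a)).prod - (B.map (fun a => X - C a)).prod) :
    A = B := by
  obtain ⟨A', rfl⟩ := Multiset.le_iff_exists_add.1 hWA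
  obtain ⟨B', rfl⟩ := Multiset.le_iff_exists_add.1 hWB
  simp only [Multiset.card_add, Multiset.map_add, Multiset.prod_add] at *
  rw [← mul_sub] at hdvd
  -- `0 ∉ W` makes every factor `X - a` with `a ∈ W` coprime to `X`, so `P_W` cancels
  have hcop : IsCoprime ((X : F[X]) ^ h) (W.map (fun a => X - C a)).prod := by
    apply IsCoprime.pow_left
    refine Multiset.prod_induction (fun P : F[X] => IsCoprime X P) _
      (fun _ _ ha hb => ha.mul_right hb) isCoprime_one_right ?_
    intro P hP
    obtain ⟨a, ha, rfl⟩ := Multiset.mem_map.1 hP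
    have hne : (0 : F) ≠ a := fun e => h0 (e ▸ ha)
    simpa using (isCoprime_X_sub_C_of_isUnit_sub (a := (0 : F)) (b := a)
      (sub_ne_zero.2 hne).isUnit)
  have hd := hcop.dvd_of_dvd_mul_left hdvd
  have hPQ : (A'.map (fun a => X - C a)).prod = (B'.map (fun a => X - C a)).prod := by
    by_contra hne
    -- the leading terms cancel, so the difference has degree below `|A'| ≤ h`
    have hmA := monic_multisetProd_X_sub_C A'
    have hmB := monic_multisetProd_X_sub_C B'
    have hdA : (A'.map (fun a => X - C a)).prod.natDegree = A'.card :=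
      natDegree_multiset_prod_X_sub_C_eq_card A'
    have hdB : (B'.map (fun a => X - C a)).prod.natDegree = B'.card :=
      natDegree_multiset_prod_X_sub_C_eq_card B'
    have hlt := degree_sub_lt_left
      (p := (A'.map (fun a => X - C a)).prod) (q := (B'.map (fun a => X - C a)).prod)
      (by rw [degree_eq_natDegree hmA.ne_zero, degree_eq_natDegree hmB.ne_zero, hdA, hdB]
          congr 1; omega) hmA.ne_zero (by rw [hmA.leadingCoeff, hmB.leadingCoeff])
    have hle := degree_le_of_dvd hd (sub_ne_zero.2 hne)
    have := hle.trans_lt hlt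
    rw [degree_X_pow, degree_eq_natDegree hmA.ne_zero, hdA] at this
    have : h < A'.card := by exact_mod_cast this
    omega
  have := congrArg roots hPQ
  rw [roots_multiset_prod_X_sub_C, roots_multiset_prod_X_sub_C] at this
  rw [this]

/-- A longest common subsequence exists. -/
lemma exists_lcs {α : Type*} {n : ℕ} (u v : Fin n → α) :
    ∃ w : List α, w.length = lcsLen u v ∧
      w.Sublist (List.ofFn u) ∧ w.Sublist (List.ofFn v) := by
  refine Nat.sSup_mem (s := {ℓ : ℕ | ∃ w : List α, w.length = ℓ ∧ w.Sublist (List.ofFn u) ∧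
    w.Sublist (List.ofFn v)}) ⟨0, [], by simp⟩ ⟨n, ?_⟩
  rintro _ ⟨w, rfl, hw, -⟩
  simpa using hw.length_le

open Polynomial in
/-- Theorem 4.5: for `q ≥ 2` and `n ≥ δ ≥ 2`, there is a code in `[q]^n` of size at least
`C(n+q-1, n)/((2q+2)^(δ-2)(2q+1))` whose insdel distance between distinct codewords is at
least `2δ`. -/
theorem exists_good_insdel_code (q n δ : ℕ) (hq : 2 ≤ q) (hδ : 2 ≤ δ) (hn : δ ≤ n) :
    ∃ C : Finset (Fin n → Fin q),
      ((Nat.choose (n + q - 1) n : ℝ))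
          / ((2 * (q : ℝ) + 2) ^ (δ - 2) * (2 * (q : ℝ) + 1)) ≤ (C.card : ℝ) ∧
      ∀ u ∈ C, ∀ v ∈ C, u ≠ v → 2 * δ ≤ insdelDist u v := by
  classical
  obtain ⟨p, hp, hqp, hp2⟩ := Nat.exists_prime_lt_and_le_two_mul q (by omega)
  have : Fact p.Prime := ⟨hp⟩
  obtain ⟨h, rfl⟩ : ∃ h, δ = h + 1 := ⟨δ - 1, by omega⟩
  -- the letters `0, …, q-1` become the nonzero residues `1, …, q`
  let a : Fin q → ZMod p := fun i => ((i.val + 1 : ℕ) : ZMod p)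
  have ha0 : ∀ i, a i ≠ 0 := by
    intro i hi
    have := Nat.le_of_dvd (by omega) ((ZMod.natCast_eq_zero_iff _ _).1 hi)
    omega
  have hainj : Function.Injective a := by
    intro i j hij
    have := (ZMod.natCast_eq_natCast_iff' _ _ _).1 hij
    rw [Nat.mod_eq_of_lt (by omega), Nat.mod_eq_of_lt (by omega)] at this
    exact Fin.ext (by omega)
  let P : Multiset (Fin q) → (ZMod p)[X] := fun s => ((s.map a).map (fun b => X - C b)).prod
  let φ : Sym (Fin q) n → (Fin h → ZMod p) := fun s i => (P s.1).coeff i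
  have hword : ∀ s : Sym (Fin q) n, ∃ u : Fin n → Fin q,
      (↑(List.ofFn u) : Multiset (Fin q)) = s.1 := by
    rintro ⟨s, hs⟩
    induction s using Quotient.inductionOn with
    | h l =>
      have hl : l.length = n := hs
      subst hl
      exact ⟨l.get, by simp⟩
  choose word hword using hword
  have hinj : Function.Injective word := fun s t hst =>
    Subtype.ext (by rw [← hword s, ← hword t, hst])
  have hqR : (2 : ℝ) ≤ q := by exact_mod_cast hq
  obtain ⟨y, hy⟩ := Fintype.exists_le_card_fiber_of_nsmul_le_card φ
    (b := (Nat.choose (n + q - 1) n : ℝ) / (p : ℝ) ^ h) (by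
      have hp0 : (p : ℝ) ≠ 0 := by exact_mod_cast hp.ne_zero
      rw [Sym.card_sym_eq_choose, nsmul_eq_mul]
      simp only [Fintype.card_pi, ZMod.card, Finset.prod_const, Finset.card_univ, Fintype.card_fin]
      push_cast
      rw [mul_div_cancel₀ _ (pow_ne_zero _ hp0), add_comm n q])
  refine ⟨(Finset.univ.filter (fun s => φ s = y)).image word, ?_, ?_⟩
  · rw [Finset.card_image_of_injective _ hinj]
    refine le_trans ?_ hy
    have hp0 : (0 : ℝ) < p := by exact_mod_cast hp.pos
    have hp2R : (p : ℝ) ≤ 2 * q := by exact_mod_cast hp2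
    gcongr
    obtain ⟨k, rfl⟩ : ∃ k, h = k + 1 := ⟨h - 1, by omega⟩
    rw [show k + 1 + 1 - 2 = k by omega, pow_succ]
    gcongr <;> linarith
  · intro u hu v hv huv
    obtain ⟨s, hs, rfl⟩ := Finset.mem_image.1 hu
    obtain ⟨t, ht, rfl⟩ := Finset.mem_image.1 hv
    have hst : φ s = φ t := (Finset.mem_filter.1 hs).2.trans (Finset.mem_filter.1 ht).2.symm
    by_contra hlt
    obtain ⟨w, hwl, hws, hwt⟩ := exists_lcs (word s) (word t)
    have hlen : n ≤ w.length + h := by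
      unfold insdelDist at hlt
      omega
    have hws' : (↑w : Multiset (Fin q)) ≤ s.1 := by
      rw [← hword s]; exact hws.subperm
    have hwt' : (↑w : Multiset (Fin q)) ≤ t.1 := by
      rw [← hword t]; exact hwt.subperm
    have hcs : Multiset.card s.1 = n := s.2
    have hct : Multiset.card t.1 = n := t.2
    have key : s.1.map a = t.1.map a := by
      refine eq_of_X_pow_dvd_sub (h := h) (W := (↑w : Multiset (Fin q)).map a) ?_
        (Multiset.map_le_map hws') (Multiset.map_le_map hwt') ?_ ?_ ?_
      · simp only [Multiset.card_map, hcs, hct]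
      · intro h0
        obtain ⟨i, -, hi⟩ := Multiset.mem_map.1 h0
        exact ha0 i hi
      · simp only [Multiset.card_map, hcs, Multiset.coe_card]
        exact hlen
      · rw [X_pow_dvd_iff]
        intro d hd
        rw [coeff_sub, sub_eq_zero]
        exact congrFun hst ⟨d, hd⟩
    exact huv (congrArg word (Subtype.ext (Multiset.map_injective hainj key)))
end

section
/- Let q be a prime power, n ≥ 4 an integer with n ≤ q, and α_1,...,α_n pairwise distinct elements of F_q. Then the two-dimensional Reed-Solomon code RS_α(n,2) has insdel distance exactly 2n − 4 if and only if there do NOT exist a ∈ F_q with a ≠ 0, b ∈ F_q, and index triples (i_1,i_2,i_3), (j_1,j_2,j_3) with 1 ≤ i_1 < i_2 < i_3 ≤ n and 1 ≤ j_1 < j_2 < j_3 ≤ n that differ in at least two coordinates, such that α_{i_ℓ} = a·α_{j_ℓ} + b for all ℓ = 1, 2, 3. -/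
/-!
The bound `k ≤ lcsLen u v` means that `u ∘ i = v ∘ j` for some strictly increasing
`i j : Fin k → Fin n` (`le_lcsLen_iff`), and the words of the code are exactly
`t ↦ c * α t + d` (`mem_rsCode_iff`).

The distance is always at most `2n - 4`: the words of `x` and of the affine map sending
`α 0 ↦ α 0`, `α 1 ↦ α 2` are distinct and share a common subsequence of length two.  So the
distance is `2n - 4` iff no two distinct words share a common subsequence of length three.

If an affine map `x ↦ a x + b` matches two distinct triples, the words of `x` and `a x + b` share
such a subsequence.  Conversely, let `c α_{i_ℓ} + d = c' α_{j_ℓ} + d'` for `ℓ = 1, 2, 3`, the two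
words being distinct.  If one of the slopes vanishes, injectivity of `α` makes the other vanish, and
then the words are equal constants.  So both slopes are nonzero and dividing by `c` gives the affine
map; the triples differ in two coordinates, since otherwise the two words agree at two positions,
which forces the affine functions to be equal.
-/

open scoped BigOperators

/-- A common subsequence of length `k` amounts to two increasing `k`-tuples of positions carrying
the same letters. -/
lemma le_lcsLen_iff {β : Type*} {n : ℕ} (u v : Fin n → β) (k : ℕ) :
    k ≤ lcsLen u v ↔ ∃ i j : Fin k → Fin n, StrictMono i ∧ StrictMono j ∧
      ∀ l, u (i l) = v (j l) := by
  have hbdd : BddAbove {ℓ : ℕ | ∃ w : List β, w.length = ℓ ∧ w.Sublist (List.ofFn u) ∧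
      w.Sublist (List.ofFn v)} := by
    refine ⟨n, ?_⟩
    rintro ℓ ⟨w, rfl, hu, -⟩
    simpa using hu.length_le
  constructor
  · intro hk
    obtain ⟨w, hw, hu, hv⟩ := Nat.sSup_mem
      (s := {ℓ : ℕ | ∃ w : List β, w.length = ℓ ∧ w.Sublist (List.ofFn u) ∧
        w.Sublist (List.ofFn v)}) ⟨0, [], rfl, by simp, by simp⟩ hbdd
    have hkw : k ≤ w.length := by rw [hw]; exact hk
    obtain ⟨f, hf⟩ := List.sublist_iff_exists_fin_orderEmbedding_get_eq.1 hu
    obtain ⟨g, hg⟩ := List.sublist_iff_exists_fin_orderEmbedding_get_eq.1 hv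
    refine ⟨fun l => Fin.cast (by simp) (f (Fin.castLE hkw l)),
      fun l => Fin.cast (by simp) (g (Fin.castLE hkw l)), ?_, ?_, ?_⟩
    · intro a b hab
      have : f (Fin.castLE hkw a) < f (Fin.castLE hkw b) := f.strictMono hab
      exact this
    · intro a b hab
      have : g (Fin.castLE hkw a) < g (Fin.castLE hkw b) := g.strictMono hab
      exact this
    · intro l
      have h := (hf (Fin.castLE hkw l)).symm.trans (hg (Fin.castLE hkw l))
      rw [List.get_ofFn, List.get_ofFn] at h
      exact h
  · rintro ⟨i, j, hi, hj, h⟩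
    have sub : ∀ (x : Fin n → β) (i : Fin k → Fin n), StrictMono i →
        (List.ofFn fun l => x (i l)).Sublist (List.ofFn x) := by
      intro x i hi
      refine List.sublist_iff_exists_fin_orderEmbedding_get_eq.2
        ⟨OrderEmbedding.ofStrictMono
          (fun l => Fin.cast (by simp) (i (Fin.cast (by simp) l))) ?_, ?_⟩
      · intro a b hab
        have : i (Fin.cast (by simp) a) < i (Fin.cast (by simp) b) := hi hab
        exact this
      · intro l
        rw [List.get_ofFn, List.get_ofFn]
        rfl
    refine le_csSup hbdd ⟨List.ofFn fun l => u (i l), by simp, sub u i hi, ?_⟩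
    rw [show (fun l => u (i l)) = fun l => v (j l) from funext h]
    exact sub v j hj

lemma mem_rsCode_iff {F : Type*} [Field F] {n : ℕ} (α c : Fin n → F) :
    (∃ f : Polynomial F, f.degree < 2 ∧ c = fun t => f.eval (α t)) ↔
      ∃ m d : F, c = fun t => m * α t + d := by
  constructor
  · rintro ⟨f, hf, rfl⟩
    have h1 : f.degree ≤ 1 := Order.le_of_lt_succ hf
    refine ⟨f.coeff 1, f.coeff 0, ?_⟩
    funext t
    conv_lhs => rw [Polynomial.eq_X_add_C_of_degree_le_one h1]
    simp
  · rintro ⟨m, d, rfl⟩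
    exact ⟨Polynomial.C m * Polynomial.X + Polynomial.C d,
      Polynomial.degree_linear_lt, by simp⟩

lemma two_le_hammingDist_fin_three {β : Type*} [DecidableEq β] (i j : Fin 3 → β)
    (h : ∀ l m, l ≠ m → i l = j l → i m ≠ j m) : 2 ≤ hammingDist i j := by
  have h01 := h 0 1 (by decide)
  have h02 := h 0 2 (by decide)
  have h12 := h 1 2 (by decide)
  rw [hammingDist, Finset.card_filter, Fin.sum_univ_three]
  split_ifs <;> simp_all

/-- Distinct affine words with a common subsequence of length three yield an affine map matching
two triples of positions. -/
lemma exists_affine_of_common {F : Type*} [Field F] {n : ℕ} (α : Fin n → F)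
    (hα : Function.Injective α) (c d c' d' : F)
    (hne : (fun t => c * α t + d) ≠ fun t => c' * α t + d')
    (i j : Fin 3 → Fin n) (hi : StrictMono i) (hj : StrictMono j)
    (h : ∀ l, c * α (i l) + d = c' * α (j l) + d') :
    ∃ (a b : F) (i j : Fin 3 → Fin n), a ≠ 0 ∧ StrictMono i ∧ StrictMono j ∧
        2 ≤ hammingDist i j ∧ ∀ ℓ : Fin 3, α (i ℓ) = a * α (j ℓ) + b := by
  have h0 := h 0
  have h1 := h 1
  have hi01 : α (i 0) - α (i 1) ≠ 0 :=
    sub_ne_zero.2 (hα.ne (hi (by decide : (0 : Fin 3) < 1)).ne)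
  have hj01 : α (j 0) - α (j 1) ≠ 0 :=
    sub_ne_zero.2 (hα.ne (hj (by decide : (0 : Fin 3) < 1)).ne)
  have key : c * (α (i 0) - α (i 1)) = c' * (α (j 0) - α (j 1)) := by
    linear_combination h0 - h1
  have hc : c ≠ 0 := by
    rintro rfl
    have hc' : c' = 0 := by simpa [hj01] using key.symm
    subst hc'
    exact hne (by funext t; linear_combination h0)
  have hc' : c' ≠ 0 := by
    rintro rfl
    exact mul_ne_zero hc hi01 (by simpa using key)
  refine ⟨c' / c, (d' - d) / c, i, j, div_ne_zero hc' hc, hi, hj, ?_, ?_⟩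
  · refine two_le_hammingDist_fin_three i j fun l m hlm hl hm => hne ?_
    have e1 := h l
    have e2 := h m
    rw [hl] at e1
    rw [hm] at e2
    have hs : α (j l) - α (j m) ≠ 0 := sub_ne_zero.2 (hα.ne (hj.injective.ne hlm))
    have : (c - c') * (α (j l) - α (j m)) = 0 := by linear_combination e1 - e2
    have hcc : c - c' = 0 := (mul_eq_zero.1 this).resolve_right hs
    funext t
    linear_combination e1 + hcc * (α t - α (j l))
  · intro l
    have := h l
    field_simp
    linear_combination this

/-- Lemma 4.6 (reformulated): a two-dimensional Reed-Solomon code of length `n` has insdel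
distance exactly `2n - 4` iff no affine map `x ↦ ax + b` (`a ≠ 0`) matches two increasing
index triples differing in at least two coordinates. -/
theorem rs_two_dim_insdel_iff (q n : ℕ) (F : Type*) [Field F] [Fintype F]
    (hF : Fintype.card F = q) (hn : 4 ≤ n) (hnq : n ≤ q)
    (α : Fin n → F) (hα : Function.Injective α) :
    insdelDistSet {c : Fin n → F |
        ∃ f : Polynomial F, f.degree < 2 ∧ c = fun t => f.eval (α t)} = 2 * n - 4 ↔
      ¬∃ (a b : F) (i j : Fin 3 → Fin n), a ≠ 0 ∧ StrictMono i ∧ StrictMono j ∧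
        2 ≤ hammingDist i j ∧ ∀ ℓ : Fin 3, α (i ℓ) = a * α (j ℓ) + b := by
  simp only [mem_rsCode_iff]
  constructor
  · rintro hd ⟨a, b, i, j, -, hi, hj, hij, h⟩
    have hlcs : 3 ≤ lcsLen (fun t => 1 * α t + 0) (fun t => a * α t + b) :=
      (le_lcsLen_iff _ _ 3).2 ⟨i, j, hi, hj, fun l => by simpa using h l⟩
    have hle : insdelDistSet {c : Fin n → F | ∃ m d : F, c = fun t => m * α t + d} ≤
        insdelDist (fun t => 1 * α t + 0) (fun t => a * α t + b) := by
      refine Nat.sInf_le ⟨_, ⟨1, 0, rfl⟩, _, ⟨a, b, rfl⟩, fun heq => ?_, rfl⟩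
      have : i = j := by
        funext l
        apply hα
        have := congrFun heq (j l)
        simp only [one_mul, add_zero] at this
        rw [h l, ← this]
      subst this
      simp at hij
    rw [hd, insdelDist] at hle
    omega
  · intro hno
    apply le_antisymm
    · let z0 : Fin n := ⟨0, by omega⟩
      let z1 : Fin n := ⟨1, by omega⟩
      let z2 : Fin n := ⟨2, by omega⟩
      have h10 : α z1 - α z0 ≠ 0 := sub_ne_zero.2 (hα.ne (by simp [z0, z1]))
      have h21 : α z1 ≠ α z2 := hα.ne (by simp [z1, z2])
      -- `x ↦ s x + (1 - s) α 0` fixes `α 0` and sends `α 1` to `α 2`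
      let s := (α z2 - α z0) / (α z1 - α z0)
      have hs : s * (α z1 - α z0) = α z2 - α z0 := div_mul_cancel₀ _ h10
      have hlcs : 2 ≤ lcsLen (fun t => 1 * α t + 0) (fun t => s * α t + (1 - s) * α z0) := by
        refine (le_lcsLen_iff _ _ 2).2 ⟨![z0, z2], ![z0, z1], ?_, ?_, ?_⟩
        · rw [Fin.strictMono_iff_lt_succ]; simp [z0, z2]
        · rw [Fin.strictMono_iff_lt_succ]; simp [z0, z1]
        · rw [Fin.forall_fin_two]
          constructor
          · simp only [Matrix.cons_val_zero]; ring
          · simp only [Matrix.cons_val_one, Matrix.cons_val_zero]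
            linear_combination -hs
      have hle : insdelDistSet {c : Fin n → F | ∃ m d : F, c = fun t => m * α t + d} ≤
          insdelDist (fun t => 1 * α t + 0) (fun t => s * α t + (1 - s) * α z0) := by
        refine Nat.sInf_le ⟨_, ⟨1, 0, rfl⟩, _, ⟨s, _, rfl⟩, fun heq => h21 ?_, rfl⟩
        have := congrFun heq z1
        linear_combination this + hs
      rw [insdelDist] at hle
      omega
    -- nonemptiness matters: `sInf` of an empty set of distances would be `0`
    · refine le_csInf ?_ ?_
      · refine ⟨_, _, ⟨0, 0, rfl⟩, _, ⟨0, 1, rfl⟩, fun heq => ?_, rfl⟩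
        simpa using congrFun heq ⟨0, by omega⟩
      · rintro _ ⟨_, ⟨c, d, rfl⟩, _, ⟨c', d', rfl⟩, hne, rfl⟩
        have : ¬ 3 ≤ lcsLen (fun t => c * α t + d) (fun t => c' * α t + d') := by
          intro h3
          obtain ⟨i, j, hi, hj, h⟩ := (le_lcsLen_iff _ _ 3).1 h3
          exact hno (exists_affine_of_common α hα c d c' d' hne i j hi hj h)
        rw [insdelDist]
        omega
end

section
/- Let n ≥ 4 be an integer and q a prime power with q > n(n−1)²(n−2)²/4. Then there exist pairwise distinct elements α_1,...,α_n ∈ F_q such that the two-dimensional Reed-Solomon code RS_α(n,2) has insdel distance exactly 2n − 4. -/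
/-!
Two affine functions `f, g` sharing a common subsequence of length three on the points `α`
give increasing index triples `i`, `j` with `f (α (i s)) = g (α (j s))`. As `α` is injective, either
`f = g`, or `f` and `g` are both nonconstant, the triples agree in at most one position, and the
triples `(α (i s))`, `(α (j s))` are related by an affine map, i.e.
`(α i₁ - α i₂) (α j₂ - α j₃) = (α i₂ - α i₃) (α j₁ - α j₂)`.
Points for which no such relation holds (`GoodPoints`) are chosen greedily. When the `m`-th point
`x` is added, each new relation is a nonzero polynomial equation of degree at most one in `x`: if
only one triple ends in `m` this is clear from injectivity, and if both do, then the coefficient of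
`x` and the constant term cannot both vanish, because the second indices differ. So at most
`m + m * (m.choose 2) ^ 2` values of `x` are forbidden, which is less than `q` for `m < n`.
Hence no two distinct codewords have a common subsequence of length three, while the identity
and the affine function with `α₀ ↦ α₀`, `α₁ ↦ α₂` have one of length two.
-/

open scoped BigOperators

/-- The first `m` terms of `a` are distinct, and no two increasing triples of indices below `m`
that agree in at most one position give affinely related triples of points. -/
def GoodPoints {F : Type*} [Field F] (a : ℕ → F) (m : ℕ) : Prop :=
  (∀ i < m, ∀ j < i, a j ≠ a i) ∧
  ∀ i₁ i₂ i₃ j₁ j₂ j₃ : ℕ, i₁ < i₂ → i₂ < i₃ → i₃ < m → j₁ < j₂ → j₂ < j₃ → j₃ < m →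
    (i₁ = j₁ → i₂ ≠ j₂) → (i₁ = j₁ → i₃ ≠ j₃) → (i₂ = j₂ → i₃ ≠ j₃) →
    (a i₁ - a i₂) * (a j₂ - a j₃) ≠ (a i₂ - a i₃) * (a j₁ - a j₂)

/-- All pairs `⟨i, j⟩` with `j < i < m`. -/
def descPairs (m : ℕ) : Finset (Σ _ : ℕ, ℕ) := (Finset.range m).sigma fun i => Finset.range i

lemma mem_descPairs {m i j : ℕ} : (⟨i, j⟩ : Σ _ : ℕ, ℕ) ∈ descPairs m ↔ i < m ∧ j < i := by
  simp [descPairs]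

lemma card_descPairs (m : ℕ) : (descPairs m).card = m * (m - 1) / 2 := by
  simp [descPairs, Finset.card_sigma, Finset.sum_range_id]

/-- One greedy step. The forbidden values for the new point are the old points, the roots of the
relations in which one triple ends in `m`, and the roots of those in which both do. -/
lemma GoodPoints.exists_succ {F : Type*} [Field F] [Fintype F] {a : ℕ → F} {m : ℕ}
    (h : GoodPoints a m) (hc : m + m * (m * (m - 1) / 2) ^ 2 < Fintype.card F) :
    ∃ b : ℕ → F, GoodPoints b (m + 1) := by
  classical
  obtain ⟨hinj, hrel⟩ := h
  -- Division by zero in `rA` and `rB` only adds harmless forbidden values.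
  let rA : ((Σ _ : ℕ, ℕ) × (Σ _ : ℕ, ℕ)) × ℕ → F := fun p =>
    a p.1.1.1 - (a p.1.1.2 - a p.1.1.1) * (a p.1.2.1 - a p.2) / (a p.1.2.2 - a p.1.2.1)
  let rB : (Σ _ : ℕ, ℕ) × (Σ _ : ℕ, ℕ) → F := fun p =>
    ((a p.1.2 - a p.1.1) * a p.2.1 - a p.1.1 * (a p.2.2 - a p.2.1)) /
      ((a p.1.2 - a p.1.1) - (a p.2.2 - a p.2.1))
  let bad : Finset F := (Finset.range m).image a ∪
    ((((descPairs m ×ˢ descPairs m) ×ˢ Finset.Ico 1 m).image rA) ∪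
      ((descPairs m ×ˢ descPairs m).image rB))
  have hbad : bad.card < Fintype.card F := by
    refine lt_of_le_of_lt ?_ hc
    have h1 : ((Finset.range m).image a).card ≤ m := by
      simpa using Finset.card_image_le (s := Finset.range m) (f := a)
    have h2 := Finset.card_image_le (s := (descPairs m ×ˢ descPairs m) ×ˢ Finset.Ico 1 m) (f := rA)
    have h3 := Finset.card_image_le (s := descPairs m ×ˢ descPairs m) (f := rB)
    rw [Finset.card_product, Finset.card_product, card_descPairs, Nat.card_Ico] at h2
    rw [Finset.card_product, card_descPairs] at h3
    have h4 := (Finset.card_union_le ((Finset.range m).image a)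
      ((((descPairs m ×ˢ descPairs m) ×ˢ Finset.Ico 1 m).image rA) ∪
      ((descPairs m ×ˢ descPairs m).image rB)))
    have h5 := (Finset.card_union_le
      (((descPairs m ×ˢ descPairs m) ×ˢ Finset.Ico 1 m).image rA)
      ((descPairs m ×ˢ descPairs m).image rB))
    change bad.card ≤ _ at h4
    rcases m with _ | k
    · simp [bad, descPairs]
    · simp only [Nat.add_sub_cancel] at *
      generalize (k + 1) * k / 2 = C at *
      nlinarith
  obtain ⟨x, hx⟩ : ∃ x, x ∉ bad := by
    by_contra! hall
    have : bad = Finset.univ := Finset.eq_univ_iff_forall.2 hall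
    rw [this, Finset.card_univ] at hbad
    exact lt_irrefl _ hbad
  have hxD : ∀ i < m, a i ≠ x := fun i hi he => hx <| Finset.mem_union_left _ <|
    Finset.mem_image.2 ⟨i, Finset.mem_range.2 hi, he⟩
  have hxA : ∀ i₁ i₂ j₁ j₂ j₃, i₁ < i₂ → i₂ < m → j₁ < j₂ → j₂ < j₃ → j₃ < m →
      (a i₁ - a i₂) * (a j₂ - a j₃) ≠ (a i₂ - x) * (a j₁ - a j₂) := by
    intro i₁ i₂ j₁ j₂ j₃ hi hi' hj hj' hj'' he
    refine hx <| Finset.mem_union_right _ <| Finset.mem_union_left _ <|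
      Finset.mem_image.2 ⟨((⟨i₂, i₁⟩, ⟨j₂, j₁⟩), j₃), ?_, ?_⟩
    · simp only [Finset.mem_product, mem_descPairs, Finset.mem_Ico]
      omega
    · have : a j₁ - a j₂ ≠ 0 := sub_ne_zero.2 (hinj j₂ (by omega) j₁ hj)
      simp only [rA, he]
      field_simp
      ring
  have hxB : ∀ i₁ i₂ j₁ j₂, i₁ < i₂ → i₂ < m → j₁ < j₂ → j₂ < m → i₂ ≠ j₂ →
      (a i₁ - a i₂) * (a j₂ - x) ≠ (a i₂ - x) * (a j₁ - a j₂) := by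
    intro i₁ i₂ j₁ j₂ hi hi' hj hj' hne he
    have hi0 : a i₁ - a i₂ ≠ 0 := sub_ne_zero.2 (hinj i₂ hi' i₁ hi)
    have hd : a j₂ - a i₂ ≠ 0 := by
      rcases lt_or_gt_of_ne hne with hlt | hlt
      · exact sub_ne_zero.2 (hinj j₂ hj' i₂ hlt).symm
      · exact sub_ne_zero.2 (hinj i₂ hi' j₂ hlt)
    by_cases hz : (a i₁ - a i₂) - (a j₁ - a j₂) = 0
    · apply mul_ne_zero hi0 hd
      linear_combination he - (a i₂ - x) * hz
    · refine hx <| Finset.mem_union_right _ <| Finset.mem_union_right _ <|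
        Finset.mem_image.2 ⟨(⟨i₂, i₁⟩, ⟨j₂, j₁⟩), ?_, ?_⟩
      · simp only [Finset.mem_product, mem_descPairs]
        omega
      · simp only [rB]
        rw [div_eq_iff hz]
        linear_combination he
  have hb : ∀ i < m, Function.update a m x i = a i := fun i hi =>
    Function.update_of_ne hi.ne _ _
  have hbm : Function.update a m x m = x := Function.update_self ..
  refine ⟨Function.update a m x, ?_, ?_⟩
  · intro i hi j hj
    rw [hb j (by omega)]
    rcases Nat.lt_succ_iff_lt_or_eq.1 hi with hi | rfl
    · rw [hb i hi]
      exact hinj i hi j hj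
    · rw [hbm]
      exact hxD j hj
  · intro i₁ i₂ i₃ j₁ j₂ j₃ hi hi' hi'' hj hj' hj'' h12 h13 h23
    rw [hb i₁ (by omega), hb i₂ (by omega), hb j₁ (by omega), hb j₂ (by omega)]
    rcases Nat.lt_succ_iff_lt_or_eq.1 hi'' with hi3 | rfl <;>
      rcases Nat.lt_succ_iff_lt_or_eq.1 hj'' with hj3 | hj3
    · rw [hb _ hi3, hb _ hj3]
      exact hrel _ _ _ _ _ _ hi hi' hi3 hj hj' hj3 h12 h13 h23
    · subst hj3
      rw [hb _ hi3, hbm]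
      intro he
      exact hxA j₁ j₂ i₁ i₂ i₃ hj hj' hi hi' hi3 (by linear_combination -he)
    · rw [hbm, hb _ hj3]
      exact hxA _ _ _ _ _ hi hi' hj hj' hj3
    · subst hj3
      rw [hbm]
      exact hxB _ _ _ _ hi hi' hj hj' (fun e => h23 e rfl)

lemma exists_goodPoints {F : Type*} [Field F] [Fintype F] {n : ℕ} (hn : 4 ≤ n)
    (hq : n * (n - 1) ^ 2 * (n - 2) ^ 2 / 4 < Fintype.card F) :
    ∃ a : ℕ → F, GoodPoints a n := by
  suffices H : ∀ m ≤ n, ∃ a : ℕ → F, GoodPoints a m from H n le_rfl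
  intro m
  induction m with
  | zero => exact fun _ => ⟨fun _ => 0, by simp, by simp⟩
  | succ m ih =>
    intro hm
    obtain ⟨a, ha⟩ := ih (by omega)
    refine ha.exists_succ (lt_of_le_of_lt ?_ hq)
    obtain ⟨N, rfl⟩ : ∃ N, n = N + 1 := ⟨n - 1, by omega⟩
    have hmN : m ≤ N := by omega
    have hmono : m * (m - 1) / 2 ≤ N * (N - 1) / 2 := by gcongr
    have h1 : m + m * (m * (m - 1) / 2) ^ 2 ≤ N + N * (N * (N - 1) / 2) ^ 2 := by gcongr
    refine h1.trans ?_
    have hN : N + 1 - 2 = N - 1 := by omega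
    rw [hN, Nat.add_sub_cancel]
    obtain ⟨C, hC⟩ : 2 ∣ N * (N - 1) := (Nat.even_mul_pred_self N).two_dvd
    have hC' : N * (N - 1) / 2 = C := by omega
    have hNC : N ≤ C := by
      have : N * 2 ≤ N * (N - 1) := Nat.mul_le_mul_left _ (by omega)
      omega
    have h4 : (N + 1) * N ^ 2 * (N - 1) ^ 2 = (N + 1) * C ^ 2 * 4 := by
      calc (N + 1) * N ^ 2 * (N - 1) ^ 2 = (N + 1) * (N * (N - 1)) ^ 2 := by ring
        _ = _ := by rw [hC]; ring
    rw [hC', h4, Nat.mul_div_cancel _ (by norm_num)]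
    nlinarith

lemma exists_affine_of_degree_lt_two {F : Type*} [Field F] {f : Polynomial F} (hf : f.degree < 2) :
    ∃ a b : F, f = Polynomial.C a * Polynomial.X + Polynomial.C b := by
  apply Polynomial.exists_eq_X_add_C_of_natDegree_le_one
  by_cases h0 : f = 0
  · simp [h0]
  · exact Nat.le_of_lt_succ ((Polynomial.natDegree_lt_iff_degree_lt h0).2 hf)

/-- At good points, two affine functions that agree along increasing triples of indices are equal:
the relation excluded by `GoodPoints` is what is left when the slopes are nonzero and the triples
agree in at most one position. -/
lemma GoodPoints.affine_eq {F : Type*} [Field F] {a : ℕ → F} {n : ℕ} (h : GoodPoints a n)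
    {b c d e : F} {i₁ i₂ i₃ j₁ j₂ j₃ : ℕ} (hi : i₁ < i₂) (hi' : i₂ < i₃) (hi'' : i₃ < n)
    (hj : j₁ < j₂) (hj' : j₂ < j₃) (hj'' : j₃ < n)
    (h1 : b * a i₁ + c = d * a j₁ + e) (h2 : b * a i₂ + c = d * a j₂ + e)
    (h3 : b * a i₃ + c = d * a j₃ + e) : b = d ∧ c = e := by
  have two : ∀ p r, p < r → r < n → b * a p + c = d * a p + e → b * a r + c = d * a r + e →
      b = d ∧ c = e := by
    intro p r hpr hr hp hr'
    have hne : a p - a r ≠ 0 := sub_ne_zero.2 (h.1 r hr p hpr)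
    have hbd : b = d := by
      apply mul_right_cancel₀ hne
      linear_combination hp - hr'
    subst hbd
    exact ⟨rfl, add_left_cancel hp⟩
  by_cases hb : b = 0
  · have hne : a j₁ - a j₂ ≠ 0 := sub_ne_zero.2 (h.1 j₂ (by omega) j₁ hj)
    have hd : d = 0 := by
      apply (mul_eq_zero.1 (?_ : d * (a j₁ - a j₂) = 0)).resolve_right hne
      subst hb
      linear_combination h2 - h1
    subst hb hd
    exact ⟨rfl, by simpa using h1⟩
  by_cases h12 : i₁ = j₁ ∧ i₂ = j₂
  · obtain ⟨rfl, rfl⟩ := h12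
    exact two _ _ hi (by omega) h1 h2
  by_cases h13 : i₁ = j₁ ∧ i₃ = j₃
  · obtain ⟨rfl, rfl⟩ := h13
    exact two _ _ (hi.trans hi') (by omega) h1 h3
  by_cases h23 : i₂ = j₂ ∧ i₃ = j₃
  · obtain ⟨rfl, rfl⟩ := h23
    exact two _ _ hi' (by omega) h2 h3
  refine absurd ?_ (h.2 _ _ _ _ _ _ hi hi' hi'' hj hj' hj'' (fun x y => h12 ⟨x, y⟩)
    (fun x y => h13 ⟨x, y⟩) (fun x y => h23 ⟨x, y⟩))
  apply mul_left_cancel₀ hb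
  linear_combination (a j₂ - a j₃) * (h1 - h2) - (a j₁ - a j₂) * (h2 - h3)

lemma exists_strictMono_of_sublist_ofFn {α : Type*} {n : ℕ} {u : Fin n → α} {w : List α}
    (h : w.Sublist (List.ofFn u)) :
    ∃ φ : Fin w.length → Fin n, StrictMono φ ∧ ∀ s, w.get s = u (φ s) := by
  obtain ⟨φ, hφ⟩ := List.sublist_iff_exists_fin_orderEmbedding_get_eq.1 h
  refine ⟨fun s => Fin.cast (by simp) (φ s), fun s t hst => ?_, fun s => ?_⟩
  · exact φ.strictMono hst
  · rw [hφ s]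
    simp [Fin.cast]

lemma lcsLen_le_two {α : Type*} {n : ℕ} {u v : Fin n → α}
    (h : ¬ ∃ i₁ i₂ i₃ j₁ j₂ j₃ : Fin n, i₁ < i₂ ∧ i₂ < i₃ ∧ j₁ < j₂ ∧ j₂ < j₃ ∧
      u i₁ = v j₁ ∧ u i₂ = v j₂ ∧ u i₃ = v j₃) : lcsLen u v ≤ 2 := by
  refine csSup_le ⟨0, [], by simp⟩ ?_
  rintro _ ⟨w, rfl, hu, hv⟩
  by_contra! hw
  obtain ⟨φ, hφ, hφ'⟩ := exists_strictMono_of_sublist_ofFn hu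
  obtain ⟨ψ, hψ, hψ'⟩ := exists_strictMono_of_sublist_ofFn hv
  have h01 : (⟨0, by omega⟩ : Fin w.length) < ⟨1, by omega⟩ := by simp
  have h12 : (⟨1, by omega⟩ : Fin w.length) < ⟨2, hw⟩ := by simp
  exact h ⟨_, _, _, _, _, _, hφ h01, hφ h12, hψ h01, hψ h12, by rw [← hφ', ← hψ'],
    by rw [← hφ', ← hψ'], by rw [← hφ', ← hψ']⟩

lemma two_le_lcsLen {α : Type*} {k : ℕ} {u v : Fin (k + 3) → α} (h0 : u 0 = v 0) (h1 : u 1 = v 2) :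
    2 ≤ lcsLen u v := by
  refine le_csSup ⟨k + 3, ?_⟩ ⟨[u 0, u 1], rfl, ?_, ?_⟩
  · rintro _ ⟨w, rfl, hu, -⟩
    simpa using hu.length_le
  · simp only [List.ofFn_succ]
    exact ((List.nil_sublist _).cons_cons _).cons_cons _
  · rw [h0, h1]
    simp only [List.ofFn_succ]
    exact (((List.nil_sublist _).cons_cons _).cons _).cons_cons _

/-- Theorem 4.8: if `q > n(n-1)²(n-2)²/4`, there are evaluation points making the
two-dimensional Reed-Solomon code of length `n` have insdel distance exactly `2n - 4`. -/
theorem exists_rs_two_dim_optimal_insdel (q n : ℕ) (F : Type*) [Field F] [Fintype F]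
    (hF : Fintype.card F = q) (hn : 4 ≤ n)
    (hq : n * (n - 1) ^ 2 * (n - 2) ^ 2 / 4 < q) :
    ∃ α : Fin n → F, Function.Injective α ∧
      insdelDistSet {c : Fin n → F |
        ∃ f : Polynomial F, f.degree < 2 ∧ c = fun t => f.eval (α t)} = 2 * n - 4 := by
  subst hF
  obtain ⟨a, ha⟩ := exists_goodPoints hn hq
  have hinj : Function.Injective fun t : Fin n => a t := by
    intro s t hst
    rcases lt_trichotomy s t with hlt | heq | hlt
    · exact absurd hst (ha.1 t t.2 s hlt)
    · exact heq
    · exact absurd hst.symm (ha.1 s s.2 t hlt)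
  refine ⟨fun t => a t, hinj, ?_⟩
  have hle : ∀ f g : Polynomial F, f.degree < 2 → g.degree < 2 → f ≠ g →
      lcsLen (fun t : Fin n => f.eval (a t)) (fun t : Fin n => g.eval (a t)) ≤ 2 := by
    intro f g hf hg hfg
    apply lcsLen_le_two
    rintro ⟨i₁, i₂, i₃, j₁, j₂, j₃, hi, hi', hj, hj', h1, h2, h3⟩
    obtain ⟨b, c, rfl⟩ := exists_affine_of_degree_lt_two hf
    obtain ⟨d, e, rfl⟩ := exists_affine_of_degree_lt_two hg
    simp only [Polynomial.eval_add, Polynomial.eval_mul, Polynomial.eval_C,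
      Polynomial.eval_X] at h1 h2 h3
    obtain ⟨rfl, rfl⟩ := ha.affine_eq hi hi' i₃.2 hj hj' j₃.2 h1 h2 h3
    exact hfg rfl
  obtain ⟨k, rfl⟩ : ∃ k, n = k + 3 := ⟨n - 3, by omega⟩
  have h01 : a 1 - a 0 ≠ 0 := sub_ne_zero.2 (ha.1 1 (by omega) 0 (by omega)).symm
  have h12 : a 1 ≠ a 2 := ha.1 2 (by omega) 1 (by omega)
  -- The affine function with `α₀ ↦ α₀` and `α₁ ↦ α₂`.
  let s : F := (a 2 - a 0) / (a 1 - a 0)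
  let f : Polynomial F := Polynomial.C s * Polynomial.X + Polynomial.C (a 0 - s * a 0)
  have hfdeg : f.degree < 2 := lt_of_le_of_lt Polynomial.degree_linear_le (by norm_num)
  have hXdeg : (Polynomial.X : Polynomial F).degree < 2 := by
    rw [Polynomial.degree_X]
    norm_num
  have hf0 : f.eval (a 0) = a 0 := by simp [f]
  have hf1 : f.eval (a 1) = a 2 := by
    simp only [f, s, Polynomial.eval_add, Polynomial.eval_mul, Polynomial.eval_C, Polynomial.eval_X]
    field_simp
    ring
  have hfX : f ≠ Polynomial.X := by
    intro he
    rw [he, Polynomial.eval_X] at hf1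
    exact h12 hf1
  have hmem : 2 * (k + 3) - 4 ∈ {d : ℕ | ∃ u ∈ {c : Fin (k + 3) → F |
      ∃ f : Polynomial F, f.degree < 2 ∧ c = fun t : Fin (k + 3) => f.eval (a t)},
      ∃ v ∈ {c : Fin (k + 3) → F |
      ∃ f : Polynomial F, f.degree < 2 ∧ c = fun t : Fin (k + 3) => f.eval (a t)},
      u ≠ v ∧ insdelDist u v = d} := by
    refine ⟨_, ⟨f, hfdeg, rfl⟩, _, ⟨Polynomial.X, hXdeg, rfl⟩, ?_, ?_⟩
    · intro he
      have := congrFun he 1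
      simp only [Polynomial.eval_X] at this
      exact h12 (this.symm.trans hf1)
    · have h2 : lcsLen (fun t : Fin (k + 3) => f.eval (a t))
          (fun t : Fin (k + 3) => (Polynomial.X : Polynomial F).eval (a t)) = 2 :=
        le_antisymm (hle _ _ hfdeg hXdeg hfX)
          (two_le_lcsLen (by simpa using hf0) (by rw [Polynomial.eval_X]; exact hf1))
      rw [insdelDist, h2]
  refine le_antisymm (Nat.sInf_le hmem) (le_csInf ⟨_, hmem⟩ ?_)
  rintro _ ⟨_, ⟨f, hf, rfl⟩, _, ⟨g, hg, rfl⟩, hne, rfl⟩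
  have := hle f g hf hg (by rintro rfl; exact hne rfl)
  exact Nat.sub_le_sub_left (Nat.mul_le_mul_left 2 this) _
end
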